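/- The multiplication map induces vector space isomorphisms U_i ⊗ k[f_i] → U_q^-(𝔤) and k[f_i] ⊗ _iU → U_q^-(𝔤), where U_i = U_q^-(𝔤) ∩ T_iU_q^-(𝔤), _iU = U_q^-(𝔤) ∩ T_i^{-1}U_q^-(𝔤), and k[f_i] denotes the subalgebra of U_q^-(𝔤) generated by f_i; equivalently, U_i = Ker r_i and _iU = Ker(_ir) and U_q^-(𝔤) = ⊕_{n≥0} U_i f_i^n = ⊕_{n≥0} f_i^n (_iU). -/

import Mathlib

noncomputable section

open scoped TensorProduct

/-- The field `ℚ(q)` of rational functions. -/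
abbrev KK : Type := RatFunc ℚ

/-- The indeterminate `q ∈ ℚ(q)`. -/
def qq : KK := RatFunc.X

/-- `q^m` for `m ∈ ℤ`. -/
def qpow (m : ℤ) : KK := qq ^ m

/-- The quantum integer `[n]_i = (q_i^n - q_i^{-n})/(q_i - q_i^{-1})` where `q_i = q^d`. -/
def qint (d n : ℤ) : KK := (qpow (d * n) - qpow (-(d * n))) / (qpow d - qpow (-d))

/-- The quantum factorial `[n]_i!`. -/
def qfact (d : ℤ) : ℕ → KK
  | 0 => 1
  | n + 1 => qfact d n * qint d (n + 1)

/-- A symmetrizable generalized Cartan matrix `a` with symmetrizers `d i`, so that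
`(α_i, α_j) = d i * a i j`. -/
structure CartanData (I : Type) : Type where
  a : I → I → ℤ
  d : I → ℤ
  d_pos : ∀ i, 0 < d i
  a_diag : ∀ i, a i i = 2
  a_offdiag : ∀ i j, i ≠ j → a i j ≤ 0
  symm : ∀ i j, d i * a i j = d j * a j i

/-- Generators of the quantum group `U_q(𝔤)` (adjoint form: `t i = q^{(α_i,α_i)/2 · h_i}`). -/
inductive QGen (I : Type) : Type
  | e : I → QGen I
  | f : I → QGen I
  | t : I → QGen I
  | tinv : I → QGen I

variable {I : Type}

/-- The free algebra on the generators of `U_q(𝔤)`. -/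
abbrev FA (I : Type) : Type := FreeAlgebra KK (QGen I)

def ge (i : I) : FA I := FreeAlgebra.ι KK (QGen.e i)
def gf (i : I) : FA I := FreeAlgebra.ι KK (QGen.f i)
def gT (i : I) : FA I := FreeAlgebra.ι KK (QGen.t i)
def gTinv (i : I) : FA I := FreeAlgebra.ι KK (QGen.tinv i)

/-- Divided power `e_i^{(s)}` in the free algebra. -/
def edp (C : CartanData I) (i : I) (s : ℕ) : FA I := (qfact (C.d i) s)⁻¹ • ge i ^ s

/-- Divided power `f_i^{(s)}` in the free algebra. -/
def fdp (C : CartanData I) (i : I) (s : ℕ) : FA I := (qfact (C.d i) s)⁻¹ • gf i ^ s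

/-- The quantum Serre element `Σ_{s} (-1)^s e_i^{(s)} e_j e_i^{(1-a_{ij}-s)}`. -/
def serreE (C : CartanData I) (i j : I) : FA I :=
  ∑ s ∈ Finset.range ((1 - C.a i j).toNat + 1),
    ((-1 : KK) ^ s) • (edp C i s * ge j * edp C i ((1 - C.a i j).toNat - s))

/-- The quantum Serre element `Σ_{s} (-1)^s f_i^{(s)} f_j f_i^{(1-a_{ij}-s)}`. -/
def serreF (C : CartanData I) (i j : I) : FA I :=
  ∑ s ∈ Finset.range ((1 - C.a i j).toNat + 1),
    ((-1 : KK) ^ s) • (fdp C i s * gf j * fdp C i ((1 - C.a i j).toNat - s))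

/-- The defining relations of the quantum group `U_q(𝔤)`. -/
inductive QRel [DecidableEq I] (C : CartanData I) : FA I → FA I → Prop
  | t_tinv (i : I) : QRel C (gT i * gTinv i) 1
  | tinv_t (i : I) : QRel C (gTinv i * gT i) 1
  | t_t (i j : I) : QRel C (gT i * gT j) (gT j * gT i)
  | t_tinv_comm (i j : I) : QRel C (gT i * gTinv j) (gTinv j * gT i)
  | t_e (i j : I) : QRel C (gT i * ge j) (qpow (C.d i * C.a i j) • (ge j * gT i))
  | t_f (i j : I) : QRel C (gT i * gf j) (qpow (-(C.d i * C.a i j)) • (gf j * gT i))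
  | e_f (i j : I) :
      QRel C (ge i * gf j - gf j * ge i)
        (if i = j then (qpow (C.d i) - qpow (-C.d i))⁻¹ • (gT i - gTinv i) else 0)
  | serre_e (i j : I) : i ≠ j → QRel C (serreE C i j) 0
  | serre_f (i j : I) : i ≠ j → QRel C (serreF C i j) 0

/-- The quantum group `U_q(𝔤)`, presented by generators and relations. -/
abbrev Uq [DecidableEq I] (C : CartanData I) : Type := RingQuot (QRel C)

variable [DecidableEq I]

/-- The canonical map from the free algebra onto `U_q(𝔤)`. -/
def uMk (C : CartanData I) : FA I →ₐ[KK] Uq C := RingQuot.mkAlgHom KK (QRel C)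

def uE (C : CartanData I) (i : I) : Uq C := uMk C (ge i)
def uF (C : CartanData I) (i : I) : Uq C := uMk C (gf i)
def uT (C : CartanData I) (i : I) : Uq C := uMk C (gT i)
def uTinv (C : CartanData I) (i : I) : Uq C := uMk C (gTinv i)

/-- Divided power `e_i^{(s)} ∈ U_q(𝔤)`. -/
def uEdp (C : CartanData I) (i : I) (s : ℕ) : Uq C := (qfact (C.d i) s)⁻¹ • uE C i ^ s

/-- Divided power `f_i^{(s)} ∈ U_q(𝔤)`. -/
def uFdp (C : CartanData I) (i : I) (s : ℕ) : Uq C := (qfact (C.d i) s)⁻¹ • uF C i ^ s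

/-- The negative half `U_q^-(𝔤)`, the subalgebra generated by the `f_i`. -/
def Uneg (C : CartanData I) : Subalgebra KK (Uq C) :=
  Algebra.adjoin KK (Set.range (uF C))

/-- The weight `-β` component of `U_q^-(𝔤)` (spanned by monomials in the `f_i` of
content `β ∈ Q_+`). -/
def negWt (C : CartanData I) (β : I →₀ ℕ) : Submodule KK (Uq C) :=
  Submodule.span KK
    {u | ∃ w : List I, (∀ j, w.count j = β j) ∧ u = (w.map (uF C)).prod}

/-- The pairing `(α_i, β) = Σ_j β_j (α_i, α_j)` for `β ∈ Q_+`. -/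
def pairB (C : CartanData I) (i : I) (β : I →₀ ℕ) : ℤ :=
  β.sum fun j m => C.d i * C.a i j * (m : ℤ)

/-- `f_j` as an element of the subalgebra `U_q^-(𝔤)`. -/
def uFneg (C : CartanData I) (j : I) : ↥(Uneg C) :=
  ⟨uF C j, Algebra.subset_adjoin ⟨j, rfl⟩⟩

/-- `t_i^m` for `m ∈ ℤ`. -/
def tpow (C : CartanData I) (i : I) (m : ℤ) : Uq C :=
  if 0 ≤ m then uT C i ^ m.toNat else uTinv C i ^ (-m).toNat


/-- `U_i = U_q^-(𝔤) ∩ T_i(U_q^-(𝔤))`. -/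
def Usub (C : CartanData I) (T : Uq C ≃ₐ[KK] Uq C) : Subalgebra KK (Uq C) :=
  Uneg C ⊓ (Uneg C).map T.toAlgHom

/-- `_iU = U_q^-(𝔤) ∩ T_i⁻¹(U_q^-(𝔤))`. -/
def subU (C : CartanData I) (T : Uq C ≃ₐ[KK] Uq C) : Subalgebra KK (Uq C) :=
  Uneg C ⊓ (Uneg C).map T.symm.toAlgHom

/-- The subalgebra `k[f_i] ⊆ U_q^-(𝔤)` generated by `f_i`. -/
def fSub (C : CartanData I) (i : I) : Subalgebra KK (Uq C) :=
  Algebra.adjoin KK {uF C i}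

/-- The multiplication map `S ⊗ S' → U_q(𝔤)`, `x ⊗ y ↦ xy`. -/
def mulTwo (C : CartanData I) (S S' : Subalgebra KK (Uq C)) :
    ↥S ⊗[KK] ↥S' →ₗ[KK] Uq C :=
  (LinearMap.mul' KK (Uq C)).comp
    (TensorProduct.map S.val.toLinearMap S'.val.toLinearMap)

set_option linter.unusedSectionVars false


lemma qq_ne_zero : qq ≠ 0 := RatFunc.X_ne_zero

lemma qpow_add (a b : ℤ) : qpow (a + b) = qpow a * qpow b := zpow_add₀ qq_ne_zero a b
lemma qpow_zero : qpow 0 = 1 := zpow_zero _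
lemma qpow_ne_zero (a : ℤ) : qpow a ≠ 0 := zpow_ne_zero _ qq_ne_zero

lemma qq_pow_ne_one (n : ℕ) (hn : n ≠ 0) : qq ^ n ≠ 1 := by
  intro h
  have h2 : algebraMap (Polynomial ℚ) (RatFunc ℚ) (Polynomial.X ^ n) =
      algebraMap (Polynomial ℚ) (RatFunc ℚ) 1 := by
    rw [map_pow, RatFunc.algebraMap_X, map_one]; exact h
  have h3 := RatFunc.algebraMap_injective ℚ h2
  have h4 := congrArg Polynomial.natDegree h3
  simp at h4
  exact hn h4

lemma qpow_eq_one {m : ℤ} (h : qpow m = 1) : m = 0 := by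
  by_contra hm
  rcases le_total 0 m with h0 | h0
  · obtain ⟨n, rfl⟩ := Int.eq_ofNat_of_zero_le h0
    unfold qpow at h
    rw [zpow_natCast] at h
    exact qq_pow_ne_one n (by simpa using hm) h
  · obtain ⟨n, hn⟩ := Int.eq_ofNat_of_zero_le (neg_nonneg.mpr h0)
    have : m = -(n : ℤ) := by omega
    subst this
    unfold qpow at h
    rw [zpow_neg, inv_eq_one, zpow_natCast] at h
    exact qq_pow_ne_one n (by simpa using hm) h

lemma qpow_inj {a b : ℤ} (h : qpow a = qpow b) : a = b := by
  have : qpow (a - b) = 1 := by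
    rw [sub_eq_add_neg, qpow_add, h, ← qpow_add, add_neg_cancel, qpow_zero]
  have := qpow_eq_one this
  omega

lemma qpow_sub_ne {a b : ℤ} (h : a ≠ b) : qpow a - qpow b ≠ 0 :=
  sub_ne_zero.mpr fun h' => h (qpow_inj h')

lemma qpow_nat_mul (a : ℤ) (n : ℕ) : qpow (a * n) = qpow a ^ n := by
  unfold qpow; rw [zpow_mul, zpow_natCast]

lemma qpow_neg (a : ℤ) : qpow (-a) = (qpow a)⁻¹ := zpow_neg _ _

lemma qint_ne_zero {d : ℤ} (hd : 0 < d) {n : ℤ} (hn : 0 < n) : qint d n ≠ 0 := by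
  unfold qint
  have := mul_pos hd hn
  exact div_ne_zero (qpow_sub_ne (by omega)) (qpow_sub_ne (by omega))

lemma qfact_ne_zero {d : ℤ} (hd : 0 < d) (n : ℕ) : qfact d n ≠ 0 := by
  induction n with
  | zero => simp [qfact]
  | succ n ih => exact mul_ne_zero ih (qint_ne_zero hd (by positivity))

lemma qint_add {d : ℤ} (r s : ℤ) :
    qint d (s + r) = qint d s * qpow (d * r) + qint d r * qpow (-(d * s)) := by
  unfold qint
  have e1 : qpow (d * (s + r)) = qpow (d * s) * qpow (d * r) := by rw [← qpow_add]; ring_nf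
  have e2 : qpow (-(d * (s + r))) = qpow (-(d * s)) * qpow (-(d * r)) := by
    rw [← qpow_add]; ring_nf
  rw [e1, e2]
  ring

section Gen
variable {k M : Type*} [Field k] [AddCommGroup M] [Module k M]

lemma gen1 (c s : k) (a b x y z w : M) :
    a + c • (s • x - y) - s • b - (z - s • (w - c • (x - s • y))) =
      a - z - s • (b - w) - (c * 1 - c * (s * s)) • y := by module

lemma gen2 (s Q K c : k) (a b : M) :
    (K * Q) • a - (Q * s) • K • b - (c * (1 - Q * s * (Q * s))) • (a - s • b) =
      (Q * K - c * (1 - Q * s * (Q * s))) • (a - s • b) := by module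

lemma gen3 (s : k) (a b x y : M) : a - s • b - (x - s • y) = a - x - s • (b - y) := by module

lemma gen4 (c s t : k) (h : s * t = 1) (a b : M) :
    c • (a - b) - s • (c • (s • a - t • b)) = (c * (1 - s * s)) • a := by
  have : s • (c • (s • a - t • b)) = (c * (s * s)) • a - (c * (s * t)) • b := by module
  rw [this, h]; module

lemma gen5 (P s t : k) (a : M) : P • a - s • (P • (t • a)) = (P * (1 - s * t)) • a := by module

end Gen

section Abs
variable {B : Type*} [Ring B] [Algebra KK B]

/-- `x_{m+1} = f x_m - q^{-p-2dm} x_m f`. -/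
def xs (f g : B) (p d : ℤ) : ℕ → B
  | 0 => g
  | m + 1 => f * xs f g p d m - qpow (-p - 2 * d * m) • (xs f g p d m * f)

/-- `y_{m+1} = y_m f - q^{-p-2dm} f y_m`. -/
def ys (f g : B) (p d : ℤ) : ℕ → B
  | 0 => g
  | m + 1 => ys f g p d m * f - qpow (-p - 2 * d * m) • (f * ys f g p d m)

lemma xs_succ (f g : B) (p d : ℤ) (m : ℕ) :
    xs f g p d (m+1) = f * xs f g p d m - qpow (-p - 2 * d * m) • (xs f g p d m * f) := rfl
lemma ys_succ (f g : B) (p d : ℤ) (m : ℕ) :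
    ys f g p d (m+1) = ys f g p d m * f - qpow (-p - 2 * d * m) • (f * ys f g p d m) := rfl

lemma xs_t {f g t : B} (p d : ℤ) {α β : KK} (hf : t * f = α • (f * t)) (hg : t * g = β • (g * t))
    (m : ℕ) : t * xs f g p d m = (β * α ^ m) • (xs f g p d m * t) := by
  induction m with
  | zero => simpa [xs] using hg
  | succ m ih =>
    rw [xs_succ, mul_sub, sub_mul, ← mul_assoc, hf, mul_smul_comm, smul_mul_assoc, mul_assoc, ih,
      ← mul_assoc t, ih, smul_mul_assoc, mul_assoc _ t, hf]
    simp only [mul_smul_comm, smul_mul_assoc, mul_assoc, smul_sub, smul_smul, pow_succ]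
    congr 2 <;> ring

lemma xs_comm {f g e : B} (p d : ℤ) (hf : e * f = f * e) (hg : e * g = g * e) (m : ℕ) :
    e * xs f g p d m = xs f g p d m * e := by
  have := xs_t (t := e) p d (α := 1) (β := 1) (by simpa using hf) (by simpa using hg) m
  simpa using this

lemma mul_inv_comm' {t ti x : B} {s : KK} (h1 : t * ti = 1) (h2 : ti * t = 1)
    (h : t * x = s • (x * t)) : x * ti = s • (ti * x) := by
  calc x * ti = ti * (t * x) * ti := by rw [← mul_assoc, h2, one_mul]
    _ = s • (ti * x * (t * ti)) := by
      rw [h]; simp only [mul_smul_comm, smul_mul_assoc, mul_assoc]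
    _ = _ := by rw [h1, mul_one]

/-- coefficients for the commutator with `e` -/
def kap (p d : ℤ) : ℕ → KK
  | 0 => 0
  | m + 1 => qpow (-(2 * d)) * kap p d m
      - (qpow d - qpow (-d))⁻¹ * (1 - qpow (-p - 2 * d * m) * qpow (-p - 2 * d * m))

lemma xs_t' {f g t : B} (p d : ℤ) (hf : t * f = qpow (-(2 * d)) • (f * t))
    (hg : t * g = qpow (-p) • (g * t)) (m : ℕ) :
    t * xs f g p d m = qpow (-p - 2 * d * m) • (xs f g p d m * t) := by
  rw [xs_t p d hf hg m, ← qpow_nat_mul, ← qpow_add]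
  congr 2; ring

lemma xs_e {e f g t ti : B} (p d : ℤ) (h1 : t * ti = 1) (h2 : ti * t = 1)
    (hf : t * f = qpow (-(2 * d)) • (f * t)) (hg : t * g = qpow (-p) • (g * t))
    (hef : e * f - f * e = (qpow d - qpow (-d))⁻¹ • (t - ti)) (heg : e * g = g * e) (m : ℕ) :
    e * xs f g p d (m+1) - xs f g p d (m+1) * e = kap p d (m+1) • (ti * xs f g p d m) := by
  have key : ∀ m : ℕ, e * xs f g p d (m+1) - xs f g p d (m+1) * e =
      f * (e * xs f g p d m - xs f g p d m * e)
      - qpow (-p - 2 * d * m) • ((e * xs f g p d m - xs f g p d m * e) * f)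
      - ((qpow d - qpow (-d))⁻¹ * (1 - qpow (-p - 2 * d * m) * qpow (-p - 2 * d * m)))
        • (ti * xs f g p d m) := by
    intro m
    have ht := xs_t' p d hf hg m
    have hti := mul_inv_comm' h1 h2 ht
    have hef' : e * f = f * e + (qpow d - qpow (-d))⁻¹ • (t - ti) := by rw [← hef]; abel
    rw [xs_succ]
    generalize qpow (-p - 2 * d * m) = s at *
    generalize (qpow d - qpow (-d))⁻¹ = c at *
    set X := xs f g p d m
    have a1 : e * (f * X) = f * (e * X) + c • (t * X - ti * X) := by
      rw [← mul_assoc, hef', add_mul, smul_mul_assoc, sub_mul, mul_assoc]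
    have a2 : X * f * e = X * (e * f) - c • (X * t - X * ti) := by
      rw [hef', mul_add, mul_smul_comm, mul_sub, mul_assoc]; abel
    rw [mul_sub, sub_mul, a1, smul_mul_assoc, a2, ht, hti, mul_smul_comm]
    simp only [mul_sub, sub_mul, mul_assoc]
    exact gen1 (k := KK) (M := B) c s _ _ _ _ _ _
  induction m with
  | zero =>
    rw [key 0]
    simp only [xs, heg, sub_self, kap]
    simp
  | succ m ih =>
    rw [key (m+1), ih]
    have hfti := mul_inv_comm' h1 h2 hf
    rw [kap.eq_2 p d (m+1), xs_succ f g p d m]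
    have e1 : qpow (-p - 2 * d * (m + 1 : ℕ)) = qpow (-(2*d)) * qpow (-p - 2 * d * m) := by
      rw [← qpow_add]; congr 1; push_cast; ring
    have e2 : f * kap p d (m+1) • (ti * xs f g p d m) =
        (kap p d (m+1) * qpow (-(2*d))) • (ti * (f * xs f g p d m)) := by
      rw [mul_smul_comm, ← mul_assoc, hfti, smul_mul_assoc, smul_smul, mul_assoc]
    rw [e2, e1]
    generalize qpow (-p - 2 * d * m) = s at *
    generalize (qpow d - qpow (-d))⁻¹ = c at *
    rw [mul_sub ti, mul_smul_comm, smul_mul_assoc, mul_assoc ti]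
    exact gen2 (k := KK) (M := B) s _ _ c _ _

lemma kap_closed (p d : ℤ) (m : ℕ) : (1 - qpow (-(2*d))) * kap p d (m+1) =
    - (qpow d - qpow (-d))⁻¹ * (1 - qpow (-(2 * d * (m+1)))) * (1 - qpow (-(2 * p) - 2 * d * m)) := by
  induction m with
  | zero =>
    simp only [kap]
    rw [← qpow_add]
    simp
    have : -p + -p = -(2*p) := by ring
    rw [this]; ring
  | succ m ih =>
    rw [kap, mul_sub, mul_left_comm, ih]
    have e1 : qpow (-(2 * d * ((m:ℤ)+1))) = qpow (-(2*d)) * qpow (-(2*d*m)) := by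
      rw [← qpow_add]; congr 1; ring
    have e2 : qpow (-(2 * d * (((m+1:ℕ):ℤ)+1))) = qpow (-(2*d)) * (qpow (-(2*d)) * qpow (-(2*d*m))) := by
      rw [← qpow_add, ← qpow_add]; congr 1; push_cast; ring
    have e3 : qpow (-(2 * p) - 2 * d * m) = qpow (-p) * qpow (-p) * qpow (-(2*d*m)) := by
      rw [← qpow_add, ← qpow_add]; congr 1; ring
    have e4 : qpow (-(2 * p) - 2 * d * (m+1:ℕ)) = qpow (-p) * qpow (-p) * (qpow (-(2*d)) * qpow (-(2*d*m))) := by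
      rw [← qpow_add, ← qpow_add, ← qpow_add]; congr 1; push_cast; ring
    have e5 : qpow (-p - 2 * d * (m+1:ℕ)) = qpow (-p) * (qpow (-(2*d)) * qpow (-(2*d*m))) := by
      rw [← qpow_add, ← qpow_add]; congr 1; push_cast; ring
    rw [e1, e2, e3, e4, e5]
    ring

lemma kap_zero {a d : ℤ} (hd : 0 < d) {A : ℕ} (hA : a = -A) : kap (d * a) d (A+1) = 0 := by
  have h := kap_closed (d * a) d A
  have : -(2 * (d * a)) - 2 * d * A = 0 := by rw [hA]; ring
  rw [this, qpow_zero, sub_self, mul_zero] at h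
  rcases mul_eq_zero.mp h with h | h
  · rw [sub_eq_zero] at h
    have := qpow_eq_one h.symm
    omega
  · exact h

lemma kap_ne_zero {a d : ℤ} (hd : 0 < d) {A m : ℕ} (hA : a = -A) (hm : m < A) :
    kap (d * a) d (m+1) ≠ 0 := by
  intro h0
  have h := kap_closed (d * a) d m
  rw [h0, mul_zero] at h
  have b1 : (1 : KK) - qpow (-(2 * d * (m+1))) ≠ 0 := by
    rw [← qpow_zero]; apply qpow_sub_ne; nlinarith
  have b2 : (1 : KK) - qpow (-(2 * (d * a)) - 2 * d * m) ≠ 0 := by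
    rw [← qpow_zero]; apply qpow_sub_ne
    have : -(2 * (d * a)) - 2 * d * m = 2 * d * (A - m) := by rw [hA]; ring
    rw [this]
    have : (0:ℤ) < A - m := by omega
    positivity
  have b3 : -(qpow d - qpow (-d))⁻¹ ≠ 0 := neg_ne_zero.mpr (inv_ne_zero (qpow_sub_ne (by omega)))
  exact mul_ne_zero (mul_ne_zero b3 b1) b2 h.symm

/-- commutation with `e_j` -/
lemma xs_ej {e f g t ti : B} (p d : ℤ) (c : KK)
    (hf : t * f = qpow (-p) • (f * t)) (hfi : ti * f = qpow p • (f * ti))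
    (heg : e * g - g * e = c • (t - ti)) (hef : e * f = f * e) (m : ℕ) :
    e * xs f g p d (m+1) - xs f g p d (m+1) * e =
      (c * ∏ k ∈ Finset.range (m+1), (1 - qpow (-(2*p) - 2*d*k))) • (f ^ (m+1) * t) := by
  have key : ∀ m : ℕ, e * xs f g p d (m+1) - xs f g p d (m+1) * e =
      f * (e * xs f g p d m - xs f g p d m * e)
      - qpow (-p - 2 * d * m) • ((e * xs f g p d m - xs f g p d m * e) * f) := by
    intro m
    rw [xs_succ]
    generalize qpow (-p - 2 * d * m) = s at *
    set X := xs f g p d m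
    have a1 : e * (f * X) = f * (e * X) := by rw [← mul_assoc, hef, mul_assoc]
    have a2 : X * f * e = X * (e * f) := by rw [hef, mul_assoc]
    rw [mul_sub, sub_mul, a1, smul_mul_assoc, a2, mul_smul_comm]
    simp only [mul_sub, sub_mul, mul_assoc]
    exact gen3 (k := KK) (M := B) s _ _ _ _
  induction m with
  | zero =>
    rw [key 0]
    simp only [xs, heg]
    have e1 : qpow (-(2*p)) = qpow (-p) * qpow (-p) := by rw [← qpow_add]; congr 1; ring
    have e2 : qpow (-p) * qpow p = 1 := by rw [← qpow_add]; simp [qpow_zero]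
    have := gen4 c (qpow (-p)) (qpow p) e2 (f * t) (f * ti)
    simp only [Nat.cast_zero, mul_zero, sub_zero, zero_add, pow_one, Finset.prod_range_one, e1]
    rw [← this, smul_mul_assoc, sub_mul, hf, hfi, mul_smul_comm, mul_sub]
  | succ m ih =>
    rw [key (m+1), ih]
    rw [smul_mul_assoc, mul_assoc _ t, hf, Finset.prod_range_succ _ (m+1)]
    have e1 : qpow (-(2*p) - 2 * d * (m+1:ℕ)) = qpow (-p - 2 * d * (m+1:ℕ)) * qpow (-p) := by
      rw [← qpow_add]; congr 1; ring
    rw [e1, mul_smul_comm, mul_smul_comm, ← mul_assoc, ← mul_assoc, ← pow_succ', ← pow_succ]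
    rw [← mul_assoc c]
    exact gen5 (k := KK) (M := B) _ _ _ _

lemma xs_ej_zero {e f g t ti : B} {a d : ℤ} (c : KK) {A : ℕ} (hA : a = -A)
    (hf : t * f = qpow (-(d*a)) • (f * t)) (hfi : ti * f = qpow (d*a) • (f * ti))
    (heg : e * g - g * e = c • (t - ti)) (hef : e * f = f * e) :
    e * xs f g (d*a) d (A+1) = xs f g (d*a) d (A+1) * e := by
  rw [← sub_eq_zero, xs_ej (d*a) d c hf hfi heg hef A, Finset.prod_range_succ]
  have : -(2 * (d * a)) - 2 * d * A = 0 := by rw [hA]; ring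
  rw [this, qpow_zero]
  simp

/-- divided powers -/
def dpw (d : ℤ) (f : B) (s : ℕ) : B := (qfact d s)⁻¹ • f ^ s

lemma mul_dpw {d : ℤ} (hd : 0 < d) (f : B) (s : ℕ) :
    f * dpw d f s = qint d (s+1:ℕ) • dpw d f (s+1) := by
  unfold dpw
  rw [mul_smul_comm, ← pow_succ', smul_smul, qfact]
  congr 1
  have := qint_ne_zero hd (n := (s:ℤ)+1) (by positivity)
  have := qfact_ne_zero hd s
  push_cast
  field_simp

lemma dpw_mul {d : ℤ} (hd : 0 < d) (f : B) (s : ℕ) :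
    dpw d f s * f = qint d (s+1:ℕ) • dpw d f (s+1) := by
  rw [← mul_dpw hd]; unfold dpw
  rw [mul_smul_comm, smul_mul_assoc, ← pow_succ, ← pow_succ']

lemma qint_zero (d : ℤ) : qint d 0 = 0 := by simp [qint]

lemma xs_expand {d : ℤ} (hd : 0 < d) (f g : B) (p : ℤ) (m : ℕ) :
    xs f g p d m = qfact d m • ∑ z ∈ Finset.HasAntidiagonal.antidiagonal m,
      ((-1 : KK) ^ z.2 * qpow (-(z.2 * (p + d * (m - 1))))) • (dpw d f z.1 * g * dpw d f z.2) := by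
  induction m with
  | zero => simp [xs, qfact, dpw, qpow_zero]
  | succ m ih =>
    rw [xs_succ, ih]
    have hsum : qint d (m+1) • ∑ z ∈ Finset.HasAntidiagonal.antidiagonal (m+1),
      ((-1 : KK) ^ z.2 * qpow (-(z.2 * (p + d * ((m+1:ℕ) - 1))))) • (dpw d f z.1 * g * dpw d f z.2)
      = ∑ z ∈ Finset.HasAntidiagonal.antidiagonal (m+1),
      (qint d z.1 * ((-1 : KK) ^ z.2 * qpow (-(z.2 * (p + d * (m-1)))))) • (dpw d f z.1 * g * dpw d f z.2)
      + ∑ z ∈ Finset.HasAntidiagonal.antidiagonal (m+1),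
      (qint d z.2 * ((-1 : KK) ^ z.2 * qpow (-(z.2 * (p + d * (m-1))) - d * (m+1)))) • (dpw d f z.1 * g * dpw d f z.2) := by
      rw [Finset.smul_sum, ← Finset.sum_add_distrib]
      refine Finset.sum_congr rfl fun z hz => ?_
      rw [Finset.HasAntidiagonal.mem_antidiagonal] at hz
      rw [smul_smul, ← add_smul]
      congr 1
      have hz' : (m:ℤ) + 1 = z.1 + z.2 := by exact_mod_cast hz.symm
      rw [hz', qint_add]
      have e1 : qpow (-(z.2 * (p + d * (m-1)))) = qpow (d * z.2) * qpow (-(z.2 * (p + d * ((m+1:ℕ) - 1)))) := by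
        rw [← qpow_add]; congr 1; push_cast; ring
      have e2 : qpow (-(z.2 * (p + d * (m-1))) - d * (z.1 + z.2)) = qpow (-(d * z.1)) * qpow (-(z.2 * (p + d * ((m+1:ℕ) - 1)))) := by
        rw [← qpow_add]; congr 1; push_cast; ring
      rw [e1, e2]; ring
    rw [qfact, mul_smul, hsum, Finset.Nat.sum_antidiagonal_succ, Finset.Nat.sum_antidiagonal_succ']
    simp only [Nat.cast_zero, qint_zero, zero_mul, zero_smul, zero_add]
    rw [mul_smul_comm, smul_mul_assoc, smul_comm (qpow _) (qfact d m), ← smul_sub]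
    congr 1
    rw [Finset.mul_sum, Finset.sum_mul, Finset.smul_sum, sub_eq_add_neg, ← Finset.sum_neg_distrib]
    congr 1
    · refine Finset.sum_congr rfl fun z hz => ?_
      rw [mul_smul_comm, ← mul_assoc, ← mul_assoc, mul_dpw hd, smul_mul_assoc, smul_mul_assoc, smul_smul]
      rw [mul_comm]
    · refine Finset.sum_congr rfl fun z hz => ?_
      rw [smul_mul_assoc, mul_assoc (_ * _) _ f, dpw_mul hd, mul_smul_comm, smul_smul, smul_smul, ← neg_smul]
      congr 1
      have e1 : qpow (-((z.2+1:ℕ) * (p + d * (m-1))) - d * (m+1)) = qpow (-p - 2 * d * m) * qpow (-(z.2 * (p + d * (m - 1)))) := by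
        rw [← qpow_add]; congr 1; push_cast; ring
      rw [e1, pow_succ]; ring

end Abs


section Serre
variable {I : Type} {B : Type*} [Ring B] [Algebra KK B]

/-- `A = -a_{ij}` as a natural number. -/
def AA (C : CartanData I) (i j : I) : ℕ := (-C.a i j).toNat

lemma AA_spec (C : CartanData I) {i j : I} (h : i ≠ j) : C.a i j = -(AA C i j : ℤ) := by
  have := C.a_offdiag i j h
  unfold AA
  omega

lemma AA_spec' (C : CartanData I) {i j : I} (h : i ≠ j) : (1 - C.a i j).toNat = AA C i j + 1 := by
  have := C.a_offdiag i j h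
  unfold AA
  omega

lemma serre_xs {a d : ℤ} (hd : 0 < d) {A : ℕ} (hA : a = -A) (f g : B) :
    ∑ s ∈ Finset.range (A + 1 + 1), ((-1 : KK) ^ s) • (dpw d f s * g * dpw d f (A + 1 - s)) =
      ((-1 : KK) ^ (A + 1) * (qfact d (A+1))⁻¹) • xs f g (d * a) d (A + 1) := by
  rw [xs_expand hd, smul_smul, mul_assoc, inv_mul_cancel₀ (qfact_ne_zero hd _), mul_one,
    Finset.Nat.sum_antidiagonal_eq_sum_range_succ_mk, Finset.smul_sum]
  refine Finset.sum_congr rfl fun s hs => ?_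
  have hs' : s ≤ A + 1 := by simpa [Nat.lt_succ_iff] using hs
  have e0 : d * a + d * ((A + 1 : ℕ) - 1) = 0 := by rw [hA]; push_cast; ring
  simp only [e0, mul_zero, neg_zero, qpow_zero, mul_one]
  rw [smul_smul]
  congr 1
  have : ((-1 : KK)) ^ (A + 1) = (-1) ^ (A + 1 - s) * (-1) ^ s := by
    rw [← pow_add]; congr 1; omega
  rw [this, mul_right_comm, ← pow_add, ← two_mul, pow_mul]
  simp

lemma xs_top {a d : ℤ} (hd : 0 < d) {A : ℕ} (hA : a = -A) (f g : B) :
    ∑ r ∈ Finset.range (A + 1), ((-1 : KK) ^ r * qpow (d * (r : ℤ))) •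
      (dpw d f (A - r) * g * dpw d f r) =
      (qfact d A)⁻¹ • xs f g (d * a) d A := by
  rw [xs_expand hd, smul_smul, inv_mul_cancel₀ (qfact_ne_zero hd _), one_smul,
    ← Finset.Nat.sum_antidiagonal_swap, Finset.Nat.sum_antidiagonal_eq_sum_range_succ_mk]
  refine Finset.sum_congr rfl fun s hs => ?_
  simp only [Prod.swap]
  congr 3
  rw [hA]; ring

/-- The non-Serre relations in an algebra. -/
structure Rels [DecidableEq I] (C : CartanData I) (E F T Ti : I → B) : Prop where
  t_ti : ∀ i, T i * Ti i = 1
  ti_t : ∀ i, Ti i * T i = 1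
  t_e : ∀ i j, T i * E j = qpow (C.d i * C.a i j) • (E j * T i)
  t_f : ∀ i j, T i * F j = qpow (-(C.d i * C.a i j)) • (F j * T i)
  e_f : ∀ i j, E i * F j - F j * E i =
    if i = j then (qpow (C.d i) - qpow (-C.d i))⁻¹ • (T i - Ti i) else 0

lemma mul_inv_comm'' {t ti x : B} {m : ℤ} (h1 : t * ti = 1) (h2 : ti * t = 1)
    (h : t * x = qpow m • (x * t)) : ti * x = qpow (-m) • (x * ti) := by
  rw [mul_inv_comm' h1 h2 h, smul_smul, ← qpow_add]
  simp [qpow_zero]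

variable [DecidableEq I] {C : CartanData I} {E F T Ti : I → B}

lemma Rels.ti_e (h : Rels C E F T Ti) (i j : I) :
    Ti i * E j = qpow (-(C.d i * C.a i j)) • (E j * Ti i) :=
  mul_inv_comm'' (h.t_ti i) (h.ti_t i) (h.t_e i j)

lemma Rels.ti_f (h : Rels C E F T Ti) (i j : I) :
    Ti i * F j = qpow (C.d i * C.a i j) • (F j * Ti i) := by
  have := mul_inv_comm'' (h.t_ti i) (h.ti_t i) (h.t_f i j)
  rwa [neg_neg] at this

lemma Rels.swap (h : Rels C E F T Ti) : Rels C F E Ti T where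
  t_ti := h.ti_t
  ti_t := h.t_ti
  t_e := h.ti_f
  t_f := h.ti_e
  e_f i j := by
    have := h.e_f j i
    rw [← neg_sub, this]
    by_cases hij : i = j
    · subst hij
      simp only [if_true]
      rw [← smul_neg, neg_sub]
    · rw [if_neg hij, if_neg (Ne.symm hij), neg_zero]

lemma Rels.e_f_comm (h : Rels C E F T Ti) {i j : I} (hij : i ≠ j) : E i * F j = F j * E i := by
  have := h.e_f i j
  rw [if_neg hij] at this
  exact sub_eq_zero.mp this

lemma Rels.xs_e (h : Rels C E F T Ti) {i j : I} (hij : i ≠ j) (m : ℕ) :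
    E i * xs (F i) (F j) (C.d i * C.a i j) (C.d i) (m+1)
      - xs (F i) (F j) (C.d i * C.a i j) (C.d i) (m+1) * E i =
    kap (C.d i * C.a i j) (C.d i) (m+1) • (Ti i * xs (F i) (F j) (C.d i * C.a i j) (C.d i) m) := by
  refine _root_.xs_e _ _ (h.t_ti i) (h.ti_t i) ?_ (h.t_f i j) ?_ (h.e_f_comm hij) m
  · rw [h.t_f, C.a_diag, mul_comm 2]
  · have := h.e_f i i
    rwa [if_pos rfl] at this

lemma Rels.serre_comm (h : Rels C E F T Ti) {i j : I} (hij : i ≠ j) (k : I) :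
    E k * xs (F i) (F j) (C.d i * C.a i j) (C.d i) (AA C i j + 1) =
      xs (F i) (F j) (C.d i * C.a i j) (C.d i) (AA C i j + 1) * E k := by
  by_cases hki : k = i
  · subst hki
    rw [← sub_eq_zero, h.xs_e hij, kap_zero (C.d_pos k) (AA_spec C hij), zero_smul]
  by_cases hkj : k = j
  · subst hkj
    refine xs_ej_zero (t := T k) (ti := Ti k) ((qpow (C.d k) - qpow (-C.d k))⁻¹) (AA_spec C hij)
      ?_ ?_ ?_ (h.e_f_comm hki)
    · rw [h.t_f, C.symm i k]
    · rw [h.ti_f, C.symm i k]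
    · have := h.e_f k k
      rwa [if_pos rfl] at this
  · exact xs_comm _ _ (h.e_f_comm hki) (h.e_f_comm hkj) _


lemma map_serreF (C : CartanData I) {i j : I} (hij : i ≠ j) (φ : FA I →ₐ[KK] B) :
    φ (serreF C i j) = ((-1 : KK) ^ (AA C i j + 1) * (qfact (C.d i) (AA C i j +1))⁻¹) •
      xs (φ (gf i)) (φ (gf j)) (C.d i * C.a i j) (C.d i) (AA C i j + 1) := by
  rw [← serre_xs (C.d_pos i) (AA_spec C hij), serreF, AA_spec' C hij, map_sum]
  refine Finset.sum_congr rfl fun s _ => ?_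
  rw [map_smul, map_mul, map_mul, fdp, fdp, map_smul, map_smul, map_pow, map_pow]
  rfl

lemma map_serreE (C : CartanData I) {i j : I} (hij : i ≠ j) (φ : FA I →ₐ[KK] B) :
    φ (serreE C i j) = ((-1 : KK) ^ (AA C i j + 1) * (qfact (C.d i) (AA C i j +1))⁻¹) •
      xs (φ (ge i)) (φ (ge j)) (C.d i * C.a i j) (C.d i) (AA C i j + 1) := by
  rw [← serre_xs (C.d_pos i) (AA_spec C hij), serreE, AA_spec' C hij, map_sum]
  refine Finset.sum_congr rfl fun s _ => ?_
  rw [map_smul, map_mul, map_mul, edp, edp, map_smul, map_smul, map_pow, map_pow]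
  rfl

end Serre


section Verma
variable {I : Type} [DecidableEq I] (C : CartanData I)

/-- free word space -/
abbrev V0 (I : Type) : Type := List I →₀ KK

def wtl (j : I) (w : List I) : ℤ := (w.map fun k => C.d j * C.a j k).sum

def opF (k : I) : Module.End KK (V0 I) := Finsupp.lmapDomain KK KK (List.cons k)
def opT (j : I) : Module.End KK (V0 I) :=
  Finsupp.linearCombination KK fun w => Finsupp.single w (qpow (-1 - wtl C j w))
def opTi (j : I) : Module.End KK (V0 I) :=
  Finsupp.linearCombination KK fun w => Finsupp.single w (qpow (1 + wtl C j w))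

def erec (j : I) : List I → V0 I
  | [] => 0
  | k :: w => opF k (erec j w) + if j = k then
      Finsupp.single w ((qpow (C.d j) - qpow (-C.d j))⁻¹ *
        (qpow (-1 - wtl C j w) - qpow (1 + wtl C j w))) else 0

def opE (j : I) : Module.End KK (V0 I) := Finsupp.linearCombination KK (erec C j)

lemma opF_single (k : I) (w : List I) (c : KK) :
    opF k (Finsupp.single w c) = Finsupp.single (k :: w) c := by
  simp [opF]
lemma opT_single (j : I) (w : List I) (c : KK) :
    opT C j (Finsupp.single w c) = Finsupp.single w (c * qpow (-1 - wtl C j w)) := by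
  simp [opT]
lemma opTi_single (j : I) (w : List I) (c : KK) :
    opTi C j (Finsupp.single w c) = Finsupp.single w (c * qpow (1 + wtl C j w)) := by
  simp [opTi]
lemma opE_single (j : I) (w : List I) (c : KK) :
    opE C j (Finsupp.single w c) = c • erec C j w := by
  simp [opE]

lemma wtl_cons (j k : I) (w : List I) : wtl C j (k :: w) = C.d j * C.a j k + wtl C j w := by
  simp [wtl]

lemma opT_opF (i j : I) : opT C i * opF j = qpow (-(C.d i * C.a i j)) • (opF j * opT C i) := by
  refine Finsupp.lhom_ext fun w c => ?_
  simp only [Module.End.mul_apply, LinearMap.smul_apply, opF_single, opT_single, Finsupp.smul_single,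
    smul_eq_mul, wtl_cons]
  congr 1
  rw [show -1 - (C.d i * C.a i j + wtl C i w) = -(C.d i * C.a i j) + (-1 - wtl C i w) by ring, qpow_add]
  ring

lemma opT_erec (i j : I) (w : List I) : opT C i (erec C j w) =
    (qpow (C.d i * C.a i j) * qpow (-1 - wtl C i w)) • erec C j w := by
  induction w with
  | nil => simp [erec]
  | cons k w ih =>
    have h1 : opT C i (opF k (erec C j w)) = qpow (-(C.d i * C.a i k)) • opF k (opT C i (erec C j w)) :=
      LinearMap.congr_fun (opT_opF C i k) (erec C j w)
    rw [erec, map_add, h1, ih, map_smul, smul_smul, smul_add, wtl_cons]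
    congr 1
    · congr 1
      rw [show -1 - (C.d i * C.a i k + wtl C i w) = -(C.d i * C.a i k) + (-1 - wtl C i w) by ring, qpow_add]
      ring
    · split_ifs with h
      · subst h
        rw [opT_single, Finsupp.smul_single, smul_eq_mul]
        congr 1
        rw [← qpow_add, show C.d i * C.a i j + (-1 - (C.d i * C.a i j + wtl C i w)) = (-1 - wtl C i w) by ring]
        ring
      · simp

lemma rels_op : Rels C (opE C) (opF (I := I)) (opT C) (opTi C) where
  t_ti i := by
    refine Finsupp.lhom_ext fun w c => ?_
    simp only [Module.End.mul_apply, opT_single, opTi_single, Module.End.one_apply]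
    rw [mul_assoc, ← qpow_add, show 1 + wtl C i w + (-1 - wtl C i w) = 0 by ring, qpow_zero, mul_one]
  ti_t i := by
    refine Finsupp.lhom_ext fun w c => ?_
    simp only [Module.End.mul_apply, opT_single, opTi_single, Module.End.one_apply]
    rw [mul_assoc, ← qpow_add, show -1 - wtl C i w + (1 + wtl C i w) = 0 by ring, qpow_zero, mul_one]
  t_e i j := by
    refine Finsupp.lhom_ext fun w c => ?_
    simp only [Module.End.mul_apply, LinearMap.smul_apply, opT_single, opE_single, map_smul, opT_erec,
      smul_smul]
    congr 1; ring
  t_f := opT_opF C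
  e_f i j := by
    refine Finsupp.lhom_ext fun w c => ?_
    simp only [Module.End.mul_apply, LinearMap.sub_apply, opF_single, opE_single, map_smul, erec]
    by_cases hij : i = j
    · subst hij
      simp only [if_true, LinearMap.smul_apply, LinearMap.sub_apply, opT_single, opTi_single]
      rw [smul_add, add_sub_cancel_left, ← Finsupp.single_sub, Finsupp.smul_single, Finsupp.smul_single]
      congr 1
      simp only [smul_eq_mul]
      ring
    · simp [hij]

def genOp : QGen I → Module.End KK (V0 I)
  | .e i => opE C i
  | .f i => opF i
  | .t i => opT C i
  | .tinv i => opTi C i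

def piV : FA I →ₐ[KK] Module.End KK (V0 I) := FreeAlgebra.lift KK (genOp C)

lemma piV_e (i : I) : piV C (ge i) = opE C i := by simp [piV, ge, genOp]
lemma piV_f (i : I) : piV C (gf i) = opF i := by simp [piV, gf, genOp]
lemma piV_t (i : I) : piV C (gT i) = opT C i := by simp [piV, gT, genOp]
lemma piV_ti (i : I) : piV C (gTinv i) = opTi C i := by simp [piV, gTinv, genOp]

/-- Serre element in operators -/
def SF (i j : I) : Module.End KK (V0 I) :=
  xs (opF i) (opF j) (C.d i * C.a i j) (C.d i) (AA C i j + 1)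

def NN : Submodule KK (V0 I) := Submodule.span KK
  {y | ∃ (w : List I) (i j : I) (x : V0 I), i ≠ j ∧ y = (w.map opF).prod (SF C i j x)}

lemma NN_F (k : I) {y : V0 I} (hy : y ∈ NN C) : opF k y ∈ NN C := by
  induction hy using Submodule.span_induction with
  | mem y hy =>
    obtain ⟨w, i, j, x, hij, rfl⟩ := hy
    exact Submodule.subset_span ⟨k :: w, i, j, x, hij, by simp⟩
  | zero => simp
  | add a b _ _ ha hb => rw [map_add]; exact add_mem ha hb
  | smul c a _ ha => rw [map_smul]; exact Submodule.smul_mem _ _ ha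

lemma NN_base {i j : I} (hij : i ≠ j) (x : V0 I) : SF C i j x ∈ NN C :=
  Submodule.subset_span ⟨[], i, j, x, hij, by simp⟩

lemma NN_word (w : List I) {i j : I} (hij : i ≠ j) (x : V0 I) :
    (w.map opF).prod (SF C i j x) ∈ NN C :=
  Submodule.subset_span ⟨w, i, j, x, hij, rfl⟩

lemma NN_stable (P : Module.End KK (V0 I))
    (h0 : ∀ i j x, i ≠ j → P (SF C i j x) ∈ NN C)
    (h1 : ∀ k y, y ∈ NN C → P y ∈ NN C → P (opF k y) ∈ NN C) {y : V0 I} (hy : y ∈ NN C) :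
    P y ∈ NN C := by
  induction hy using Submodule.span_induction with
  | mem y hy =>
    obtain ⟨w, i, j, x, hij, rfl⟩ := hy
    induction w with
    | nil => simpa using h0 i j x hij
    | cons k w ih =>
      simp only [List.map_cons, List.prod_cons, Module.End.mul_apply]
      exact h1 k _ (NN_word C w hij x) ih
  | zero => simp
  | add a b _ _ ha hb => rw [map_add]; exact add_mem ha hb
  | smul c a _ ha => rw [map_smul]; exact Submodule.smul_mem _ _ ha

lemma NN_T (k : I) {y : V0 I} (hy : y ∈ NN C) : opT C k y ∈ NN C := by
  refine NN_stable C _ (fun i j x hij => ?_) (fun l y _ hy => ?_) hy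
  · have := LinearMap.congr_fun (xs_t (C.d i * C.a i j) (C.d i) ((rels_op C).t_f k i)
      ((rels_op C).t_f k j) (AA C i j + 1)) x
    have h2 : opT C k (SF C i j x) = _ := this
    rw [h2]
    exact Submodule.smul_mem _ _ (NN_base C hij _)
  · have h2 : opT C k (opF l y) = _ := LinearMap.congr_fun ((rels_op C).t_f k l) y
    rw [h2]
    exact Submodule.smul_mem _ _ (NN_F C l hy)

lemma NN_Ti (k : I) {y : V0 I} (hy : y ∈ NN C) : opTi C k y ∈ NN C := by
  refine NN_stable C _ (fun i j x hij => ?_) (fun l y _ hy => ?_) hy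
  · have := LinearMap.congr_fun (xs_t (C.d i * C.a i j) (C.d i) ((rels_op C).ti_f k i)
      ((rels_op C).ti_f k j) (AA C i j + 1)) x
    have h2 : opTi C k (SF C i j x) = _ := this
    rw [h2]
    exact Submodule.smul_mem _ _ (NN_base C hij _)
  · have h2 : opTi C k (opF l y) = _ := LinearMap.congr_fun ((rels_op C).ti_f k l) y
    rw [h2]
    exact Submodule.smul_mem _ _ (NN_F C l hy)

lemma NN_E (k : I) {y : V0 I} (hy : y ∈ NN C) : opE C k y ∈ NN C := by
  refine NN_stable C _ (fun i j x hij => ?_) (fun l y hyN hy => ?_) hy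
  · have h2 : opE C k (SF C i j x) = SF C i j (opE C k x) :=
      LinearMap.congr_fun ((rels_op C).serre_comm hij k) x
    rw [h2]
    exact NN_base C hij _
  · have h2 : opE C k (opF l y) = opF l (opE C k y) + (if k = l then
        (qpow (C.d k) - qpow (-C.d k))⁻¹ • (opT C k - opTi C k) else 0) y := by
      have := (rels_op C).e_f k l
      rw [sub_eq_iff_eq_add] at this
      have := LinearMap.congr_fun this y
      rw [Module.End.mul_apply] at this
      rw [this, LinearMap.add_apply, Module.End.mul_apply, add_comm]
    rw [h2]
    refine add_mem (NN_F C l hy) ?_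
    split_ifs
    · exact Submodule.smul_mem _ _ (sub_mem (NN_T C k hyN) (NN_Ti C k hyN))
    · simp

lemma NN_gen (g : QGen I) : NN C ≤ (NN C).comap (genOp C g) := by
  intro y hy
  cases g with
  | e i => exact NN_E C i hy
  | f i => exact NN_F C i hy
  | t i => exact NN_T C i hy
  | tinv i => exact NN_Ti C i hy

/-- the Verma module -/
abbrev VM : Type := V0 I ⧸ NN C

def piQ : FA I →ₐ[KK] Module.End KK (VM C) :=
  FreeAlgebra.lift KK fun g => (NN C).mapQ (NN C) (genOp C g) (NN_gen C g)

lemma piQ_mk (a : FA I) : ∀ x : V0 I,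
    piQ C a ((NN C).mkQ x) = (NN C).mkQ (piV C a x) := by
  induction a using FreeAlgebra.induction with
  | grade0 r => intro x; simp [Algebra.algebraMap_eq_smul_one]
  | grade1 g => intro x; simp [piQ, piV]
  | mul a b ha hb => intro x; rw [map_mul, map_mul, Module.End.mul_apply, Module.End.mul_apply, hb, ha]
  | add a b ha hb =>
    intro x; rw [map_add, map_add, LinearMap.add_apply, LinearMap.add_apply, ha, hb, map_add]

lemma piQ_eq {a b : FA I} (h : piV C a = piV C b) : piQ C a = piQ C b := by
  refine LinearMap.ext fun y => ?_
  obtain ⟨x, rfl⟩ := (NN C).mkQ_surjective y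
  rw [piQ_mk, piQ_mk, h]

/-- the Serre relation for `e` holds on the word space -/
lemma SE_zero {i j : I} (hij : i ≠ j) :
    xs (opE C i) (opE C j) (C.d i * C.a i j) (C.d i) (AA C i j + 1) = 0 := by
  have h0 : ∀ m : ℕ, xs (opE C i) (opE C j) (C.d i * C.a i j) (C.d i) m (Finsupp.single [] 1) = 0 := by
    intro m
    induction m with
    | zero => simp [xs, opE_single, erec]
    | succ m ih =>
      rw [xs_succ, LinearMap.sub_apply, LinearMap.smul_apply, Module.End.mul_apply,
        Module.End.mul_apply, ih, opE_single, erec]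
      simp
  have hc := (rels_op C).swap.serre_comm hij
  have h1 : ∀ w : List I, xs (opE C i) (opE C j) (C.d i * C.a i j) (C.d i) (AA C i j + 1)
      (Finsupp.single w 1) = 0 := by
    intro w
    induction w with
    | nil => exact h0 _
    | cons k w ih =>
      rw [← opF_single, ← Module.End.mul_apply, ← hc k, Module.End.mul_apply, ih, map_zero]
  refine Finsupp.lhom_ext fun w c => ?_
  have : Finsupp.single w c = c • Finsupp.single w (1 : KK) := by simp
  rw [this, map_smul, h1]; simp

lemma piQ_rel {a b : FA I} (h : QRel C a b) : piQ C a = piQ C b := by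
  have R := rels_op C
  cases h with
  | t_tinv i => apply piQ_eq; simp only [map_mul, map_one, piV_t, piV_ti, R.t_ti]
  | tinv_t i => apply piQ_eq; simp only [map_mul, map_one, piV_t, piV_ti, R.ti_t]
  | t_t i j =>
    apply piQ_eq; simp only [map_mul, piV_t]
    refine Finsupp.lhom_ext fun w c => ?_
    simp only [Module.End.mul_apply, opT_single]
    rw [mul_right_comm]
  | t_tinv_comm i j =>
    apply piQ_eq; simp only [map_mul, piV_t, piV_ti]
    refine Finsupp.lhom_ext fun w c => ?_
    simp only [Module.End.mul_apply, opT_single, opTi_single]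
    rw [mul_right_comm]
  | t_e i j => apply piQ_eq; simp only [map_mul, map_smul, piV_t, piV_e, R.t_e]
  | t_f i j => apply piQ_eq; simp only [map_mul, map_smul, piV_t, piV_f, R.t_f]
  | e_f i j =>
    apply piQ_eq; simp only [map_mul, map_sub, piV_f, piV_e, R.e_f]
    split_ifs <;> simp only [map_smul, map_sub, piV_t, piV_ti, map_zero]
  | serre_e i j hij =>
    apply piQ_eq; rw [map_serreE (B := Module.End KK (V0 I)) C hij (piV C), piV_e, piV_e, SE_zero C hij, smul_zero, map_zero]
  | serre_f i j hij =>
    refine LinearMap.ext fun y => ?_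
    obtain ⟨x, rfl⟩ := (NN C).mkQ_surjective y
    rw [piQ_mk, map_serreF (B := Module.End KK (V0 I)) C hij (piV C), piV_f, piV_f, map_zero, LinearMap.zero_apply,
      LinearMap.smul_apply, map_smul]
    have : (NN C).mkQ (SF C i j x) = 0 := by
      simpa using NN_base C hij x
    unfold SF at this
    rw [this, smul_zero]

/-- the Verma representation of `U_q` -/
def rho : Uq C →ₐ[KK] Module.End KK (VM C) :=
  RingQuot.liftAlgHom KK ⟨piQ C, fun _ _ h => piQ_rel C h⟩

lemma rho_mk (a : FA I) (x : V0 I) :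
    rho C (uMk C a) ((NN C).mkQ x) = (NN C).mkQ (piV C a x) := by
  rw [← piQ_mk, rho, uMk, RingQuot.liftAlgHom_mkAlgHom_apply]

lemma uMk_rel {a b : FA I} (h : QRel C a b) : uMk C a = uMk C b :=
  RingQuot.mkAlgHom_rel KK h

lemma rels_U : Rels C (uE C) (uF C) (uT C) (uTinv C) where
  t_ti i := by have := uMk_rel C (QRel.t_tinv i); rwa [map_mul, map_one] at this
  ti_t i := by have := uMk_rel C (QRel.tinv_t i); rwa [map_mul, map_one] at this
  t_e i j := by have := uMk_rel C (QRel.t_e i j); rwa [map_mul, map_smul, map_mul] at this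
  t_f i j := by have := uMk_rel C (QRel.t_f i j); rwa [map_mul, map_smul, map_mul] at this
  e_f i j := by
    have := uMk_rel C (QRel.e_f i j)
    rw [map_sub, map_mul, map_mul] at this
    refine this.trans ?_
    split_ifs
    · rw [map_smul, map_sub]; rfl
    · rw [map_zero]

lemma serre_U {i j : I} (hij : i ≠ j) :
    xs (uF C i) (uF C j) (C.d i * C.a i j) (C.d i) (AA C i j + 1) = 0 := by
  have h := uMk_rel C (QRel.serre_f i j hij)
  rw [map_serreF C hij, map_zero] at h
  refine (smul_eq_zero.mp h).resolve_left ?_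
  exact mul_ne_zero (pow_ne_zero _ (by simp)) (inv_ne_zero (qfact_ne_zero (C.d_pos i) _))

/-- word space to `U` -/
def Psi0 : V0 I →ₗ[KK] Uq C := Finsupp.linearCombination KK fun w => (w.map (uF C)).prod

lemma Psi0_F (k : I) (x : V0 I) : Psi0 C (opF k x) = uF C k * Psi0 C x := by
  have : Psi0 C ∘ₗ opF k = LinearMap.mulLeft KK (uF C k) ∘ₗ Psi0 C := by
    refine Finsupp.lhom_ext fun w c => ?_
    simp [Psi0, opF_single]
  exact LinearMap.congr_fun this x

lemma Psi0_xs (i j : I) (p d : ℤ) (m : ℕ) : ∀ x : V0 I,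
    Psi0 C (xs (opF i) (opF j) p d m x) = xs (uF C i) (uF C j) p d m * Psi0 C x := by
  induction m with
  | zero => intro x; exact Psi0_F C j x
  | succ m ih =>
    intro x
    rw [xs_succ, xs_succ, LinearMap.sub_apply, LinearMap.smul_apply, Module.End.mul_apply,
      Module.End.mul_apply, map_sub, map_smul, Psi0_F, ih, ih, Psi0_F, sub_mul, smul_mul_assoc,
      mul_assoc (uF C i), mul_assoc (xs _ _ _ _ _)]

lemma Psi0_NN : NN C ≤ LinearMap.ker (Psi0 C) := by
  intro y hy
  refine Submodule.span_le.mpr ?_ hy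
  rintro _ ⟨w, i, j, x, hij, rfl⟩
  rw [SetLike.mem_coe, LinearMap.mem_ker]
  induction w with
  | nil => rw [List.map_nil, List.prod_nil, Module.End.one_apply, SF, Psi0_xs, serre_U C hij, zero_mul]
  | cons k w ih => rw [List.map_cons, List.prod_cons, Module.End.mul_apply, Psi0_F, ih, mul_zero]

def Psi : VM C →ₗ[KK] Uq C := (NN C).liftQ (Psi0 C) (Psi0_NN C)

lemma Psi_mk (x : V0 I) : Psi C ((NN C).mkQ x) = Psi0 C x := by
  simp [Psi]

lemma Psi_F {u : Uq C} (hu : u ∈ Uneg C) : ∀ y : VM C, Psi C (rho C u y) = u * Psi C y := by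
  induction hu using Algebra.adjoin_induction with
  | mem u hu =>
    obtain ⟨k, rfl⟩ := hu
    intro y
    obtain ⟨x, rfl⟩ := (NN C).mkQ_surjective y
    rw [uF, rho_mk, Psi_mk, Psi_mk, piV_f, Psi0_F]; rfl
  | algebraMap r => intro y; simp [Algebra.algebraMap_eq_smul_one]
  | add a b _ _ ha hb => intro y; rw [map_add, LinearMap.add_apply, map_add, ha, hb, add_mul]
  | mul a b _ _ ha hb => intro y; rw [map_mul, Module.End.mul_apply, ha, hb, mul_assoc]

/-- `f_i^m v` -/
def vv (i : I) (m : ℕ) : VM C := (NN C).mkQ (Finsupp.single (List.replicate m i) 1)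

lemma Psi_vv (i : I) : Psi C (vv C i 0) = 1 := by
  rw [vv, Psi_mk]; simp [Psi0]

def eps (d : ℤ) : ℕ → KK
  | 0 => 0
  | m + 1 => eps d m + (qpow d - qpow (-d))⁻¹ * (qpow (-1 - 2 * d * m) - qpow (1 + 2 * d * m))

lemma eps_closed {d : ℤ} (hd : 0 < d) (m : ℕ) : (qpow d - qpow (-d)) * eps d m =
    (qpow d - qpow (-d))⁻¹ * ((qpow (d * m) - qpow (-(d * m))) *
      (qpow (-1) * qpow (- (d * (m - 1))) - qpow 1 * qpow (d * (m - 1)))) := by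
  have hc : qpow d - qpow (-d) ≠ 0 := qpow_sub_ne (by omega)
  induction m with
  | zero => simp [eps]
  | succ m ih =>
    rw [eps, mul_add, ih, mul_inv_cancel_left₀ hc]
    field_simp
    have e1 : qpow (-1 - 2 * d * m) = qpow (-1) * (qpow (-(d*m)) * qpow (-(d * m))) := by
      rw [← qpow_add, ← qpow_add]; congr 1; ring
    have e2 : qpow (1 + 2 * d * m) = qpow 1 * (qpow ((d*m)) * qpow ((d * m))) := by
      rw [← qpow_add, ← qpow_add]; congr 1; ring
    have e3 : qpow (-(d * (m - 1))) = qpow (-(d * m)) * qpow d := by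
      rw [← qpow_add]; congr 1; ring
    have e4 : qpow (d * (m - 1)) = qpow (d * m) * qpow (-d) := by
      rw [← qpow_add]; congr 1; ring
    have e5 : qpow (d * (m+1:ℕ)) = qpow (d * m) * qpow d := by
      rw [← qpow_add]; congr 1; push_cast; ring
    have e6 : qpow (-(d * (m+1:ℕ))) = qpow (-(d * m)) * qpow (-d) := by
      rw [← qpow_add]; congr 1; push_cast; ring
    have e7 : qpow (-(d * ((m+1:ℕ) - 1))) = qpow (-(d * m)) := by
      congr 1; push_cast; ring
    have e8 : qpow (d * ((m+1:ℕ) - 1)) = qpow (d * m) := by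
      congr 1; push_cast; ring
    have e9 : qpow (d * m) * qpow (-(d*m)) = 1 := by rw [← qpow_add]; simp [qpow_zero]
    have e10 : qpow d * qpow (-d) = 1 := by rw [← qpow_add]; simp [qpow_zero]
    rw [e1, e2, e3, e4, e5, e6, e7, e8]
    generalize qpow (d * m) = x at *
    generalize qpow (-(d * m)) = y at *
    generalize qpow d = u at *
    generalize qpow (-d) = w at *
    generalize qpow 1 = l at *
    generalize qpow (-1) = k at *
    ring

lemma eps_ne_zero {d : ℤ} (hd : 0 < d) (m : ℕ) : eps d (m+1) ≠ 0 := by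
  intro h0
  have h := eps_closed hd (m+1)
  rw [h0, mul_zero] at h
  have hc : qpow d - qpow (-d) ≠ 0 := qpow_sub_ne (by omega)
  have h1 : qpow (d * (m+1:ℕ)) - qpow (-(d * (m+1:ℕ))) ≠ 0 := by
    apply qpow_sub_ne
    have : (0:ℤ) < d * (m+1:ℕ) := by positivity
    omega
  have h2 : qpow (-1) * qpow (- (d * ((m+1:ℕ) - 1))) - qpow 1 * qpow (d * ((m+1:ℕ) - 1)) ≠ 0 := by
    rw [← qpow_add, ← qpow_add]
    apply qpow_sub_ne
    have : (0:ℤ) ≤ d * m := by positivity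
    push_cast
    rw [add_sub_cancel_right]
    omega
  exact mul_ne_zero (inv_ne_zero hc) (mul_ne_zero h1 h2) h.symm

lemma wtl_rep (i : I) (m : ℕ) : wtl C i (List.replicate m i) = 2 * C.d i * m := by
  simp [wtl, C.a_diag]; ring

lemma erec_rep (i : I) (m : ℕ) : erec C i (List.replicate (m+1) i) =
    Finsupp.single (List.replicate m i) (eps (C.d i) (m+1)) := by
  induction m with
  | zero => simp [erec, eps, wtl]
  | succ m ih =>
    rw [List.replicate_succ, erec, ih, if_pos rfl, opF_single, ← List.replicate_succ,
      ← Finsupp.single_add, wtl_rep, eps.eq_2 _ (m+1)]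

lemma tie_vv (i : I) (m : ℕ) : ∃ c : KK, c ≠ 0 ∧
    rho C (-(uTinv C i * uE C i)) (vv C i (m+1)) = c • vv C i m := by
  refine ⟨-(eps (C.d i) (m+1) * qpow (1 + wtl C i (List.replicate m i))),
    neg_ne_zero.mpr (mul_ne_zero (eps_ne_zero (C.d_pos i) m) (qpow_ne_zero _)), ?_⟩
  rw [map_neg, map_mul, LinearMap.neg_apply, Module.End.mul_apply, uTinv, uE, vv, rho_mk, rho_mk,
    piV_e, opE_single, one_smul, erec_rep, piV_ti, opTi_single, vv, ← map_smul, neg_smul, map_neg]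
  simp

lemma tie_vv0 (i : I) : rho C (-(uTinv C i * uE C i)) (vv C i 0) = 0 := by
  rw [map_neg, map_mul, LinearMap.neg_apply, Module.End.mul_apply, uE, vv, rho_mk,
    piV_e, opE_single]
  simp [erec]

lemma tie_pow (i : I) (n : ℕ) : ∃ c : KK, c ≠ 0 ∧
    rho C ((-(uTinv C i * uE C i)) ^ n) (vv C i n) = c • vv C i 0 := by
  induction n with
  | zero => exact ⟨1, one_ne_zero, by simp⟩
  | succ n ih =>
    obtain ⟨c, hc, h⟩ := ih
    obtain ⟨c', hc', h'⟩ := tie_vv C i n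
    refine ⟨c' * c, mul_ne_zero hc' hc, ?_⟩
    rw [pow_succ, map_mul, Module.End.mul_apply, h', map_smul, h, smul_smul]

lemma tie_pow_zero (i : I) (n m : ℕ) (hmn : m < n) :
    rho C ((-(uTinv C i * uE C i)) ^ n) (vv C i m) = 0 := by
  induction m generalizing n with
  | zero =>
    obtain ⟨n, rfl⟩ : ∃ k, n = k + 1 := ⟨n - 1, by omega⟩
    rw [pow_succ, map_mul, Module.End.mul_apply, tie_vv0, map_zero]
  | succ m ih =>
    obtain ⟨n, rfl⟩ : ∃ k, n = k + 1 := ⟨n - 1, by omega⟩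
    obtain ⟨c', hc', h'⟩ := tie_vv C i m
    rw [pow_succ, map_mul, Module.End.mul_apply, h', map_smul, ih n (by omega), smul_zero]

/-- the needed part of the triangular decomposition -/
lemma triang (i : I) (N : ℕ) (b : ℕ → Uq C) (hb : ∀ n, b n ∈ Uneg C)
    (hz : ∑ n ∈ Finset.range N, b n * (-(uTinv C i * uE C i)) ^ n ∈ Uneg C) :
    ∀ n, 0 < n → n < N → b n = 0 := by
  set z := ∑ n ∈ Finset.range N, b n * (-(uTinv C i * uE C i)) ^ n with hzdef
  have happ : ∀ m, rho C z (vv C i m) = ∑ n ∈ Finset.range N,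
      rho C (b n) (rho C ((-(uTinv C i * uE C i)) ^ n) (vv C i m)) := by
    intro m
    rw [hzdef, map_sum, LinearMap.sum_apply]
    refine Finset.sum_congr rfl fun n _ => ?_
    rw [map_mul, Module.End.mul_apply]
  intro n
  induction n using Nat.strong_induction_on with
  | _ n ih =>
    intro hn hnN
    have h0 : z = b 0 := by
      have h1 := happ 0
      rw [Finset.sum_eq_single 0] at h1
      · have h2 := congrArg (Psi C) h1
        rw [Psi_F C hz, pow_zero, map_one, Module.End.one_apply, Psi_F C (hb 0), Psi_vv,
          mul_one, mul_one] at h2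
        exact h2
      · intro k _ hk
        rw [tie_pow_zero C i k 0 (by omega), map_zero]
      · intro h; simp at h; omega
    have h1 := happ n
    rw [h0] at h1
    have hsub : ({0, n} : Finset ℕ) ⊆ Finset.range N := by
      intro k hk; simp at hk ⊢; omega
    rw [← Finset.sum_subset hsub, Finset.sum_pair (by omega), pow_zero, map_one,
      Module.End.one_apply, left_eq_add] at h1
    · obtain ⟨c, hc, h⟩ := tie_pow C i n
      rw [h, map_smul] at h1
      have h2 := congrArg (Psi C) ((smul_eq_zero.mp h1).resolve_left hc)
      rw [Psi_F C (hb n), Psi_vv, mul_one, map_zero] at h2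
      exact h2
    · intro k hk hk'
      simp at hk hk'
      rcases lt_or_ge n k with h | h
      · rw [tie_pow_zero C i k n h, map_zero]
      · rw [ih k (by omega) (by omega) hk, map_zero, LinearMap.zero_apply]

end Verma


section Gen4

lemma uniq_aux {V : Type*} [AddCommGroup V] [Module KK V] (M r : V →ₗ[KK] V) (Q : KK)
    (hQ : ∀ n : ℕ, ∑ k ∈ Finset.range (n+1), Q ^ k ≠ 0)
    (h : ∀ x, r (M x) = Q • M (r x) + x) (N : ℕ) : ∀ (a : ℕ → V), (∀ n, r (a n) = 0) →
    ∑ n ∈ Finset.range N, (M ^ n) (a n) = 0 → ∀ n < N, a n = 0 := by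
  have key : ∀ (x : V), r x = 0 → ∀ n : ℕ, r ((M ^ (n+1)) x) =
      (∑ k ∈ Finset.range (n+1), Q ^ k) • (M ^ n) x := by
    intro x hx n
    induction n with
    | zero => simp [h, hx]
    | succ n ih =>
      rw [pow_succ' M (n+1), Module.End.mul_apply, h, ih, map_smul, ← Module.End.mul_apply,
        ← pow_succ', smul_smul, Finset.sum_range_succ' _ (n+1), add_smul, pow_zero, one_smul,
        Finset.mul_sum]
      congr 3
      exact funext fun k => (pow_succ' Q k).symm
  induction N with
  | zero => intro a _ _ n hn; omega
  | succ N ih =>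
    intro a ha hs
    have h1 : ∀ n < N, a (n+1) = 0 := by
      have := ih (fun n => (∑ k ∈ Finset.range (n+1), Q ^ k) • a (n+1))
        (fun n => by rw [map_smul, ha, smul_zero]) (by
          have h2 := congrArg r hs
          rw [Finset.sum_range_succ', map_add, map_sum, pow_zero, Module.End.one_apply, ha,
            add_zero, map_zero] at h2
          rw [← h2]
          refine Finset.sum_congr rfl fun n _ => ?_
          rw [key _ (ha _), map_smul])
      intro n hn
      exact (smul_eq_zero.mp (this n hn)).resolve_left (hQ n)
    rw [Finset.sum_range_succ', Finset.sum_eq_zero (fun n hn => by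
      rw [h1 n (Finset.mem_range.mp hn), map_zero]), zero_add, pow_zero, Module.End.one_apply] at hs
    intro n hn
    cases n with
    | zero => exact hs
    | succ n => exact h1 n (by omega)

lemma geom_ne {d : ℤ} (hd : 0 < d) (n : ℕ) :
    ∑ k ∈ Finset.range (n+1), (qpow (-(2*d))) ^ k ≠ 0 := by
  intro h
  have h2 := geom_sum_mul (qpow (-(2*d))) (n+1)
  rw [h, zero_mul, ← qpow_nat_mul] at h2
  have := qpow_eq_one (sub_eq_zero.mp h2.symm)
  have h3 : (0:ℤ) < ((n+1 : ℕ) : ℤ) := by positivity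
  nlinarith [mul_pos hd h3]

variable {B B' : Type*} [Ring B] [Algebra KK B] [Ring B'] [Algebra KK B']

lemma map_xs (φ : B →ₐ[KK] B') (f g : B) (p d : ℤ) (m : ℕ) :
    φ (xs f g p d m) = xs (φ f) (φ g) p d m := by
  induction m with
  | zero => rfl
  | succ m ih => rw [xs_succ, xs_succ, map_sub, map_smul, map_mul, map_mul, ih]

lemma map_ys (φ : B →ₐ[KK] B') (f g : B) (p d : ℤ) (m : ℕ) :
    φ (ys f g p d m) = ys (φ f) (φ g) p d m := by
  induction m with
  | zero => rfl
  | succ m ih => rw [ys_succ, ys_succ, map_sub, map_smul, map_mul, map_mul, ih]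

/-- sums `∑ a_n f^n` -/
def LR (S : Subalgebra KK B) (f : B) : (ℕ →₀ S) →ₗ[KK] B :=
  Finsupp.lsum KK fun n => LinearMap.mulRight KK (f ^ n) ∘ₗ S.val.toLinearMap

/-- sums `∑ f^n a_n` -/
def LL (S : Subalgebra KK B) (f : B) : (ℕ →₀ S) →ₗ[KK] B :=
  Finsupp.lsum KK fun n => LinearMap.mulLeft KK (f ^ n) ∘ₗ S.val.toLinearMap

lemma LR_single (S : Subalgebra KK B) (f : B) (n : ℕ) (a : S) :
    LR S f (Finsupp.single n a) = a * f ^ n := by simp [LR]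
lemma LL_single (S : Subalgebra KK B) (f : B) (n : ℕ) (a : S) :
    LL S f (Finsupp.single n a) = f ^ n * a := by simp [LL]

lemma supp_lt {S : Type*} [Zero S] (a : ℕ →₀ S) : ∃ N, a.support ⊆ Finset.range N :=
  ⟨a.support.sup id + 1, fun n hn => Finset.mem_range.mpr
    (Nat.lt_succ_of_le (Finset.le_sup (f := id) hn))⟩

lemma LR_range (S : Subalgebra KK B) (f : B) (a : ℕ →₀ S) {N : ℕ}
    (h : a.support ⊆ Finset.range N) :
    LR S f a = ∑ n ∈ Finset.range N, (a n : B) * f ^ n := by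
  rw [LR, Finsupp.lsum_apply, Finsupp.sum_of_support_subset _ h _ (by simp)]
  rfl
lemma LL_range (S : Subalgebra KK B) (f : B) (a : ℕ →₀ S) {N : ℕ}
    (h : a.support ⊆ Finset.range N) :
    LL S f a = ∑ n ∈ Finset.range N, f ^ n * (a n : B) := by
  rw [LL, Finsupp.lsum_apply, Finsupp.sum_of_support_subset _ h _ (by simp)]
  rfl

lemma LR_top (S : Subalgebra KK B) (f : B) (G : Set B) (hG : Algebra.adjoin KK G = ⊤)
    (X : Set B) (hS : S = Algebra.adjoin KK X) (hX : ∀ x ∈ X, ∃ b ∈ S, ∃ c ∈ S, f * x = b * f + c)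
    (hGX : ∀ g ∈ G, g = f ∨ g ∈ S) : ∀ u : B, ∃ a, LR S f a = u := by
  have h1 : ∀ x ∈ S, ∃ b ∈ S, ∃ c ∈ S, f * x = b * f + c := by
    intro x hx
    rw [hS] at hx
    induction hx using Algebra.adjoin_induction with
    | mem x h => exact hX x h
    | algebraMap c =>
      exact ⟨algebraMap KK B c, S.algebraMap_mem c, 0, S.zero_mem, by
        rw [add_zero, Algebra.commutes]⟩
    | add x y hx hy ihx ihy =>
      obtain ⟨b, hb, c, hc, e⟩ := ihx
      obtain ⟨b', hb', c', hc', e'⟩ := ihy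
      exact ⟨b + b', S.add_mem hb hb', c + c', S.add_mem hc hc', by rw [mul_add, e, e']; noncomm_ring⟩
    | mul x y hx hy ihx ihy =>
      obtain ⟨b, hb, c, hc, e⟩ := ihx
      obtain ⟨b', hb', c', hc', e'⟩ := ihy
      refine ⟨b * b', S.mul_mem hb hb', b * c' + c * y,
        S.add_mem (S.mul_mem hb hc') (S.mul_mem hc (hS ▸ hy)), ?_⟩
      rw [← mul_assoc, e, add_mul, mul_assoc b f, e']; noncomm_ring
  have hf : ∀ u ∈ LinearMap.range (LR S f), f * u ∈ LinearMap.range (LR S f) := by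
    rintro _ ⟨a, rfl⟩
    induction a using Finsupp.induction_linear with
    | zero => simp
    | add a b ha hb => rw [map_add, mul_add]; exact Submodule.add_mem _ ha hb
    | single n a =>
      obtain ⟨b, hb, c, hc, e⟩ := h1 a a.2
      refine ⟨Finsupp.single (n+1) ⟨b, hb⟩ + Finsupp.single n ⟨c, hc⟩, ?_⟩
      rw [map_add, LR_single, LR_single, LR_single, ← mul_assoc, e, add_mul, mul_assoc b f,
        ← pow_succ']
  have hs : ∀ s ∈ S, ∀ u ∈ LinearMap.range (LR S f), s * u ∈ LinearMap.range (LR S f) := by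
    rintro s hs _ ⟨a, rfl⟩
    induction a using Finsupp.induction_linear with
    | zero => simp
    | add a b ha hb => rw [map_add, mul_add]; exact Submodule.add_mem _ ha hb
    | single n a =>
      exact ⟨Finsupp.single n (⟨s, hs⟩ * a), by
        rw [LR_single, LR_single, ← mul_assoc]; rfl⟩
  have h1' : (1 : B) ∈ LinearMap.range (LR S f) := ⟨Finsupp.single 0 1, by simp [LR_single]⟩
  have hall : ∀ u ∈ Algebra.adjoin KK G, ∀ v ∈ LinearMap.range (LR S f),
      u * v ∈ LinearMap.range (LR S f) := by
    intro u hu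
    induction hu using Algebra.adjoin_induction with
    | mem x h =>
      rcases hGX x h with rfl | h
      · exact hf
      · exact hs x h
    | algebraMap c => intro v hv; rw [← Algebra.smul_def]; exact Submodule.smul_mem _ _ hv
    | add x y _ _ ihx ihy =>
      intro v hv; rw [add_mul]; exact Submodule.add_mem _ (ihx v hv) (ihy v hv)
    | mul x y _ _ ihx ihy => intro v hv; rw [mul_assoc]; exact ihx _ (ihy v hv)
  intro u
  have := hall u (by rw [hG]; trivial) 1 h1'
  rwa [mul_one] at this

lemma LL_top (S : Subalgebra KK B) (f : B) (G : Set B) (hG : Algebra.adjoin KK G = ⊤)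
    (X : Set B) (hS : S = Algebra.adjoin KK X) (hX : ∀ x ∈ X, ∃ b ∈ S, ∃ c ∈ S, x * f = f * b + c)
    (hGX : ∀ g ∈ G, g = f ∨ g ∈ S) : ∀ u : B, ∃ a, LL S f a = u := by
  have h1 : ∀ x ∈ S, ∃ b ∈ S, ∃ c ∈ S, x * f = f * b + c := by
    intro x hx
    rw [hS] at hx
    induction hx using Algebra.adjoin_induction with
    | mem x h => exact hX x h
    | algebraMap c =>
      exact ⟨algebraMap KK B c, S.algebraMap_mem c, 0, S.zero_mem, by
        rw [add_zero, Algebra.commutes]⟩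
    | add x y hx hy ihx ihy =>
      obtain ⟨b, hb, c, hc, e⟩ := ihx
      obtain ⟨b', hb', c', hc', e'⟩ := ihy
      exact ⟨b + b', S.add_mem hb hb', c + c', S.add_mem hc hc', by rw [add_mul, e, e']; noncomm_ring⟩
    | mul x y hx hy ihx ihy =>
      obtain ⟨b, hb, c, hc, e⟩ := ihx
      obtain ⟨b', hb', c', hc', e'⟩ := ihy
      refine ⟨b * b', S.mul_mem hb hb', c * b' + x * c',
        S.add_mem (S.mul_mem hc hb') (S.mul_mem (hS ▸ hx) hc'), ?_⟩
      rw [mul_assoc, e', mul_add, ← mul_assoc x f, e]; noncomm_ring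
  have hf : ∀ u ∈ LinearMap.range (LL S f), u * f ∈ LinearMap.range (LL S f) := by
    rintro _ ⟨a, rfl⟩
    induction a using Finsupp.induction_linear with
    | zero => simp
    | add a b ha hb => rw [map_add, add_mul]; exact Submodule.add_mem _ ha hb
    | single n a =>
      obtain ⟨b, hb, c, hc, e⟩ := h1 a a.2
      refine ⟨Finsupp.single (n+1) ⟨b, hb⟩ + Finsupp.single n ⟨c, hc⟩, ?_⟩
      rw [map_add, LL_single, LL_single, LL_single, mul_assoc, e, mul_add, ← mul_assoc _ f,
        ← pow_succ]
  have hs : ∀ s ∈ S, ∀ u ∈ LinearMap.range (LL S f), u * s ∈ LinearMap.range (LL S f) := by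
    rintro s hs _ ⟨a, rfl⟩
    induction a using Finsupp.induction_linear with
    | zero => simp
    | add a b ha hb => rw [map_add, add_mul]; exact Submodule.add_mem _ ha hb
    | single n a =>
      exact ⟨Finsupp.single n (a * ⟨s, hs⟩), by
        rw [LL_single, LL_single, mul_assoc]; rfl⟩
  have h1' : (1 : B) ∈ LinearMap.range (LL S f) := ⟨Finsupp.single 0 1, by simp [LL_single]⟩
  have hall : ∀ u ∈ Algebra.adjoin KK G, ∀ v ∈ LinearMap.range (LL S f),
      v * u ∈ LinearMap.range (LL S f) := by
    intro u hu
    induction hu using Algebra.adjoin_induction with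
    | mem x h =>
      rcases hGX x h with rfl | h
      · exact hf
      · exact hs x h
    | algebraMap c =>
      intro v hv; rw [← Algebra.commutes, ← Algebra.smul_def]; exact Submodule.smul_mem _ _ hv
    | add x y _ _ ihx ihy =>
      intro v hv; rw [mul_add]; exact Submodule.add_mem _ (ihx v hv) (ihy v hv)
    | mul x y _ _ ihx ihy => intro v hv; rw [← mul_assoc]; exact ihy _ (ihx v hv)
  intro u
  have := hall u (by rw [hG]; trivial) 1 h1'
  rwa [one_mul] at this

/-- kernel of a twisted derivation, right version -/
lemma ker_R (S : Subalgebra KK B) (f : B) (r : B →ₗ[KK] B) (Q : KK)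
    (hQ : ∀ n : ℕ, ∑ k ∈ Finset.range (n+1), Q ^ k ≠ 0)
    (h : ∀ x, r (x * f) = Q • (r x * f) + x) (hS : ∀ s ∈ S, r s = 0)
    (htop : ∀ u : B, ∃ a, LR S f a = u) :
    (∀ u, r u = 0 ↔ u ∈ S) ∧ ∀ (N : ℕ) (a : ℕ → B), (∀ n, a n ∈ S) →
      ∑ n ∈ Finset.range N, a n * f ^ n = 0 → ∀ n < N, a n = 0 := by
  have hu := uniq_aux (LinearMap.mulRight KK f) r Q hQ (by intro x; simpa using h x)
  simp only [LinearMap.pow_mulRight, LinearMap.mulRight_apply] at hu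
  refine ⟨fun u => ⟨fun hr => ?_, hS u⟩, ?_⟩
  · obtain ⟨a, rfl⟩ := htop u
    obtain ⟨N, hN⟩ := supp_lt a
    have hN' : a.support ⊆ Finset.range (N+1) :=
      hN.trans (Finset.range_mono (Nat.le_succ N))
    set u := LR S f a with hua
    have := hu (N+1) (fun n => (a n : B) - if n = 0 then u else 0) (fun n => by
      rw [map_sub, hS _ (a n).2]; split_ifs <;> simp [hr]) (by
      simp only [sub_mul, Finset.sum_sub_distrib]
      rw [← LR_range S f a hN', ← hua]
      simp) 0 (by omega)
    simp only [if_true] at this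
    rw [← sub_eq_zero.mp this]
    exact (a 0).2
  · exact fun N a ha => hu N a fun n => hS _ (ha n)

/-- kernel of a twisted derivation, left version -/
lemma ker_L (S : Subalgebra KK B) (f : B) (r : B →ₗ[KK] B) (Q : KK)
    (hQ : ∀ n : ℕ, ∑ k ∈ Finset.range (n+1), Q ^ k ≠ 0)
    (h : ∀ x, r (f * x) = Q • (f * r x) + x) (hS : ∀ s ∈ S, r s = 0)
    (htop : ∀ u : B, ∃ a, LL S f a = u) :
    (∀ u, r u = 0 ↔ u ∈ S) ∧ ∀ (N : ℕ) (a : ℕ → B), (∀ n, a n ∈ S) →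
      ∑ n ∈ Finset.range N, f ^ n * a n = 0 → ∀ n < N, a n = 0 := by
  have hu := uniq_aux (LinearMap.mulLeft KK f) r Q hQ (by intro x; simpa using h x)
  simp only [LinearMap.pow_mulLeft, LinearMap.mulLeft_apply] at hu
  refine ⟨fun u => ⟨fun hr => ?_, hS u⟩, ?_⟩
  · obtain ⟨a, rfl⟩ := htop u
    obtain ⟨N, hN⟩ := supp_lt a
    have hN' : a.support ⊆ Finset.range (N+1) :=
      hN.trans (Finset.range_mono (Nat.le_succ N))
    set u := LL S f a with hua
    have := hu (N+1) (fun n => (a n : B) - if n = 0 then u else 0) (fun n => by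
      rw [map_sub, hS _ (a n).2]; split_ifs <;> simp [hr]) (by
      simp only [mul_sub, Finset.sum_sub_distrib]
      rw [← LL_range S f a hN', ← hua]
      simp) 0 (by omega)
    simp only [if_true] at this
    rw [← sub_eq_zero.mp this]
    exact (a 0).2
  · exact fun N a ha => hu N a fun n => hS _ (ha n)

lemma LR_inj (S : Subalgebra KK B) (f : B)
    (hu : ∀ (N : ℕ) (a : ℕ → B), (∀ n, a n ∈ S) →
      ∑ n ∈ Finset.range N, a n * f ^ n = 0 → ∀ n < N, a n = 0) : Function.Injective (LR S f) := by
  rw [injective_iff_map_eq_zero]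
  intro a ha
  obtain ⟨N, hN⟩ := supp_lt a
  rw [LR_range S f a hN] at ha
  have := hu N (fun n => (a n : B)) (fun n => (a n).2) ha
  ext n
  by_cases hn : n < N
  · simpa using this n hn
  · have : n ∉ a.support := fun h => hn (Finset.mem_range.mp (hN h))
    simpa using this

lemma LL_inj (S : Subalgebra KK B) (f : B)
    (hu : ∀ (N : ℕ) (a : ℕ → B), (∀ n, a n ∈ S) →
      ∑ n ∈ Finset.range N, f ^ n * a n = 0 → ∀ n < N, a n = 0) : Function.Injective (LL S f) := by
  rw [injective_iff_map_eq_zero]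
  intro a ha
  obtain ⟨N, hN⟩ := supp_lt a
  rw [LL_range S f a hN] at ha
  have := hu N (fun n => (a n : B)) (fun n => (a n).2) ha
  ext n
  by_cases hn : n < N
  · simpa using this n hn
  · have : n ∉ a.support := fun h => hn (Finset.mem_range.mp (hN h))
    simpa using this

/-- powers of `f` as elements of `k[f]` -/
def fp (f : B) (n : ℕ) : Algebra.adjoin KK ({f} : Set B) :=
  ⟨f, Algebra.subset_adjoin rfl⟩ ^ n

lemma fp_val (f : B) (n : ℕ) : (fp f n : B) = f ^ n := by simp [fp]

lemma fp_span (f : B) : Submodule.span KK (Set.range (fp f)) = ⊤ := by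
  refine eq_top_iff.mpr fun x _ => ?_
  obtain ⟨x, hx⟩ := x
  have hx0 := hx
  rw [Algebra.adjoin_singleton_eq_range_aeval] at hx0
  obtain ⟨p, hp⟩ := hx0
  have : (⟨x, hx⟩ : Algebra.adjoin KK ({f} : Set B)) = p.sum fun n c => c • fp f n := by
    apply Subtype.ext
    refine hp.symm.trans ?_
    simp only [Polynomial.sum, AddSubmonoidClass.coe_finsetSum, Subalgebra.coe_smul, fp_val]
    exact Polynomial.aeval_eq_sum_range' (lt_add_one _) f |>.trans (by
      rw [← Polynomial.sum_over_range' p (f := fun n c => c • f ^ n) (by simp) _ (lt_add_one _)]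
      rfl)
  rw [this]
  exact Submodule.sum_mem _ fun n _ => Submodule.smul_mem _ _ (Submodule.subset_span ⟨n, rfl⟩)

lemma tens_R (S : Subalgebra KK B) (f : B) (hinj : Function.Injective (LR S f)) :
    Function.Injective ((LinearMap.mul' KK B).comp (TensorProduct.map S.val.toLinearMap
      (Algebra.adjoin KK ({f} : Set B)).val.toLinearMap)) ∧
    LinearMap.range ((LinearMap.mul' KK B).comp (TensorProduct.map S.val.toLinearMap
      (Algebra.adjoin KK ({f} : Set B)).val.toLinearMap)) = LinearMap.range (LR S f) := by
  set μ := (LinearMap.mul' KK B).comp (TensorProduct.map S.val.toLinearMap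
      (Algebra.adjoin KK ({f} : Set B)).val.toLinearMap) with hμ
  let σ : (ℕ →₀ S) →ₗ[KK] S ⊗[KK] (Algebra.adjoin KK ({f} : Set B)) :=
    Finsupp.lsum KK fun n => (TensorProduct.mk KK S _).flip (fp f n)
  have hσ : Function.Surjective σ := by
    rw [← LinearMap.range_eq_top, eq_top_iff]
    intro x hx0
    clear hx0
    induction x using TensorProduct.induction_on with
    | zero => exact Submodule.zero_mem _
    | add x y hx hy => exact Submodule.add_mem _ hx hy
    | tmul s y =>
      have hy : y ∈ Submodule.span KK (Set.range (fp f)) := by rw [fp_span]; trivial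
      induction hy using Submodule.span_induction with
      | mem y h => obtain ⟨n, rfl⟩ := h; exact ⟨Finsupp.single n s, by simp [σ]⟩
      | zero => rw [TensorProduct.tmul_zero]; exact Submodule.zero_mem _
      | add y z _ _ hy hz => rw [TensorProduct.tmul_add]; exact Submodule.add_mem _ hy hz
      | smul c y _ hy => rw [TensorProduct.tmul_smul]; exact Submodule.smul_mem _ _ hy
  have hc : μ ∘ₗ σ = LR S f := by
    refine Finsupp.lhom_ext fun n a => ?_
    rw [LR_single, LinearMap.comp_apply]
    simp [σ, hμ, fp_val]
  constructor
  · intro x y hxy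
    obtain ⟨a, rfl⟩ := hσ x
    obtain ⟨b, rfl⟩ := hσ y
    rw [← LinearMap.comp_apply, ← LinearMap.comp_apply, hc] at hxy
    rw [hinj hxy]
  · rw [← hc]
    exact (LinearMap.range_comp_of_range_eq_top μ (LinearMap.range_eq_top.mpr hσ)).symm

lemma tens_L (S : Subalgebra KK B) (f : B) (hinj : Function.Injective (LL S f)) :
    Function.Injective ((LinearMap.mul' KK B).comp (TensorProduct.map
      (Algebra.adjoin KK ({f} : Set B)).val.toLinearMap S.val.toLinearMap)) ∧
    LinearMap.range ((LinearMap.mul' KK B).comp (TensorProduct.map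
      (Algebra.adjoin KK ({f} : Set B)).val.toLinearMap S.val.toLinearMap)) =
      LinearMap.range (LL S f) := by
  set μ := (LinearMap.mul' KK B).comp (TensorProduct.map
      (Algebra.adjoin KK ({f} : Set B)).val.toLinearMap S.val.toLinearMap) with hμ
  let σ : (ℕ →₀ S) →ₗ[KK] (Algebra.adjoin KK ({f} : Set B)) ⊗[KK] S :=
    Finsupp.lsum KK fun n => (TensorProduct.mk KK _ S) (fp f n)
  have hσ : Function.Surjective σ := by
    rw [← LinearMap.range_eq_top, eq_top_iff]
    intro x hx0
    clear hx0
    induction x using TensorProduct.induction_on with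
    | zero => exact Submodule.zero_mem _
    | add x y hx hy => exact Submodule.add_mem _ hx hy
    | tmul y s =>
      have hy : y ∈ Submodule.span KK (Set.range (fp f)) := by rw [fp_span]; trivial
      induction hy using Submodule.span_induction with
      | mem y h => obtain ⟨n, rfl⟩ := h; exact ⟨Finsupp.single n s, by simp [σ]⟩
      | zero => rw [TensorProduct.zero_tmul]; exact Submodule.zero_mem _
      | add y z _ _ hy hz => rw [TensorProduct.add_tmul]; exact Submodule.add_mem _ hy hz
      | smul c y _ hy => rw [← TensorProduct.smul_tmul']; exact Submodule.smul_mem _ _ hy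
  have hc : μ ∘ₗ σ = LL S f := by
    refine Finsupp.lhom_ext fun n a => ?_
    rw [LL_single, LinearMap.comp_apply]
    simp [σ, hμ, fp_val]
  constructor
  · intro x y hxy
    obtain ⟨a, rfl⟩ := hσ x
    obtain ⟨b, rfl⟩ := hσ y
    rw [← LinearMap.comp_apply, ← LinearMap.comp_apply, hc] at hxy
    rw [hinj hxy]
  · rw [← hc]
    exact (LinearMap.range_comp_of_range_eq_top μ (LinearMap.range_eq_top.mpr hσ)).symm

end Gen4


section Fin5
variable (C : CartanData I) (i : I)

lemma negWt_mul {β γ : I →₀ ℕ} {u v : Uq C} (hu : u ∈ negWt C β) (hv : v ∈ negWt C γ) :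
    u * v ∈ negWt C (β + γ) := by
  have h := Submodule.mul_mem_mul hu hv
  rw [negWt, negWt, Submodule.span_mul_span] at h
  refine Submodule.span_mono ?_ h
  rintro _ ⟨_, ⟨w, hw, rfl⟩, _, ⟨w', hw', rfl⟩, rfl⟩
  exact ⟨w ++ w', fun j => by rw [List.count_append, hw, hw']; rfl, by simp⟩

lemma negWt_one : (1 : Uq C) ∈ negWt C 0 :=
  Submodule.subset_span ⟨[], by simp, by simp⟩

lemma negWt_F (j : I) : uF C j ∈ negWt C (Finsupp.single j 1) :=
  Submodule.subset_span ⟨[j], fun k => by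
    simp [List.count_singleton, Finsupp.single_apply], by simp⟩

lemma pairB_zero : pairB C i 0 = 0 := by simp [pairB]

lemma pairB_add (β γ : I →₀ ℕ) : pairB C i (β + γ) = pairB C i β + pairB C i γ := by
  unfold pairB
  exact Finsupp.sum_add_index' (by simp) (by intros; push_cast; ring)

lemma pairB_single (j : I) (m : ℕ) : pairB C i (Finsupp.single j m) = C.d i * C.a i j * m := by
  simp [pairB]

/-- the elements `x_{j,m}` in `U^-` -/
def Xn (j : I) (m : ℕ) : Uneg C := xs (uFneg C i) (uFneg C j) (C.d i * C.a i j) (C.d i) m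
/-- the elements `y_{j,m}` in `U^-` -/
def Yn (j : I) (m : ℕ) : Uneg C := ys (uFneg C i) (uFneg C j) (C.d i * C.a i j) (C.d i) m

lemma Xn_val (j : I) (m : ℕ) :
    (Xn C i j m : Uq C) = xs (uF C i) (uF C j) (C.d i * C.a i j) (C.d i) m :=
  map_xs (B := Uneg C) (B' := Uq C) (Uneg C).val _ _ _ _ _
lemma Yn_val (j : I) (m : ℕ) :
    (Yn C i j m : Uq C) = ys (uF C i) (uF C j) (C.d i * C.a i j) (C.d i) m :=
  map_ys (B := Uneg C) (B' := Uq C) (Uneg C).val _ _ _ _ _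

lemma Xn_succ (j : I) (m : ℕ) : Xn C i j (m+1) = uFneg C i * Xn C i j m -
    qpow (-(C.d i * C.a i j) - 2 * C.d i * m) • (Xn C i j m * uFneg C i) := rfl
lemma Yn_succ (j : I) (m : ℕ) : Yn C i j (m+1) = Yn C i j m * uFneg C i -
    qpow (-(C.d i * C.a i j) - 2 * C.d i * m) • (uFneg C i * Yn C i j m) := rfl

/-- weight of `x_{j,m}` -/
def wX (j : I) (m : ℕ) : I →₀ ℕ := Finsupp.single j 1 + Finsupp.single i m

lemma wX_succ (j : I) (m : ℕ) : wX i j (m+1) = wX i j m + Finsupp.single i 1 := by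
  rw [wX, wX, Finsupp.single_add, add_assoc]

lemma pair_wX (j : I) (m : ℕ) :
    -pairB C i (wX i j m) = -(C.d i * C.a i j) - 2 * C.d i * m := by
  rw [wX, pairB_add, pairB_single, pairB_single, C.a_diag]; push_cast; ring

lemma Xn_wt (j : I) (m : ℕ) : (Xn C i j m : Uq C) ∈ negWt C (wX i j m) := by
  induction m with
  | zero => rw [wX, Finsupp.single_zero, add_zero]; exact negWt_F C j
  | succ m ih =>
    rw [Xn_succ]
    refine Submodule.sub_mem _ ?_ (Submodule.smul_mem _ _ ?_)
    · rw [wX_succ, add_comm]; exact negWt_mul C (negWt_F C i) ih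
    · rw [wX_succ]; exact negWt_mul C ih (negWt_F C i)

lemma Yn_wt (j : I) (m : ℕ) : (Yn C i j m : Uq C) ∈ negWt C (wX i j m) := by
  induction m with
  | zero => rw [wX, Finsupp.single_zero, add_zero]; exact negWt_F C j
  | succ m ih =>
    rw [Yn_succ]
    refine Submodule.sub_mem _ ?_ (Submodule.smul_mem _ _ ?_)
    · rw [wX_succ]; exact negWt_mul C ih (negWt_F C i)
    · rw [wX_succ, add_comm]; exact negWt_mul C (negWt_F C i) ih

/-- generators of `Ker r_i` -/
def GX : Set (Uneg C) := {x | ∃ j m, j ≠ i ∧ x = Xn C i j m}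
/-- generators of `Ker _ir` -/
def GY : Set (Uneg C) := {x | ∃ j m, j ≠ i ∧ x = Yn C i j m}

lemma Uneg_gen : Algebra.adjoin KK (Set.range (uFneg C)) = ⊤ := by
  have h := Algebra.adjoin_adjoin_coe_preimage (R := KK) (s := Set.range (uF C))
  refine Eq.trans ?_ h
  congr 1
  ext x
  constructor
  · rintro ⟨j, rfl⟩; exact ⟨j, rfl⟩
  · rintro ⟨j, hj⟩; exact ⟨j, Subtype.ext hj⟩

lemma top_X (u : Uneg C) : ∃ a, LR (Algebra.adjoin KK (GX C i)) (uFneg C i) a = u := by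
  refine LR_top (B := Uneg C) _ _ _ (Uneg_gen C) _ rfl ?_ ?_ u
  · rintro _ ⟨j, m, hj, rfl⟩
    refine ⟨qpow (-(C.d i * C.a i j) - 2 * C.d i * m) • Xn C i j m,
      Subalgebra.smul_mem (Algebra.adjoin KK (GX C i)) (Algebra.subset_adjoin ⟨j, m, hj, rfl⟩) _, Xn C i j (m+1),
      Algebra.subset_adjoin ⟨j, m+1, hj, rfl⟩, ?_⟩
    rw [Xn_succ, smul_mul_assoc, add_sub_cancel (G := Uneg C)]
  · rintro _ ⟨j, rfl⟩
    by_cases hj : j = i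
    · left; rw [hj]
    · right; exact Algebra.subset_adjoin ⟨j, 0, hj, rfl⟩

lemma top_Y (u : Uneg C) : ∃ a, LL (Algebra.adjoin KK (GY C i)) (uFneg C i) a = u := by
  refine LL_top (B := Uneg C) _ _ _ (Uneg_gen C) _ rfl ?_ ?_ u
  · rintro _ ⟨j, m, hj, rfl⟩
    refine ⟨qpow (-(C.d i * C.a i j) - 2 * C.d i * m) • Yn C i j m,
      Subalgebra.smul_mem (Algebra.adjoin KK (GY C i)) (Algebra.subset_adjoin ⟨j, m, hj, rfl⟩) _, Yn C i j (m+1),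
      Algebra.subset_adjoin ⟨j, m+1, hj, rfl⟩, ?_⟩
    rw [Yn_succ, mul_smul_comm, add_sub_cancel (G := Uneg C)]
  · rintro _ ⟨j, rfl⟩
    by_cases hj : j = i
    · left; rw [hj]
    · right; exact Algebra.subset_adjoin ⟨j, 0, hj, rfl⟩

lemma r_main (r : Uneg C →ₗ[KK] Uneg C)
    (hr_gen : ∀ k : I, r (uFneg C k) = if i = k then 1 else 0)
    (hr_leib : ∀ (γ : I →₀ ℕ) (x y : ↥(Uneg C)), (y : Uq C) ∈ negWt C γ →
        r (x * y) = qpow (-pairB C i γ) • (r x * y) + x * r y) :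
    (∀ u, r u = 0 ↔ u ∈ Algebra.adjoin KK (GX C i)) ∧
    ∀ (N : ℕ) (a : ℕ → Uneg C), (∀ n, a n ∈ Algebra.adjoin KK (GX C i)) →
      ∑ n ∈ Finset.range N, a n * uFneg C i ^ n = 0 → ∀ n < N, a n = 0 := by
  have hf : ∀ x, r (x * uFneg C i) = qpow (-(2 * C.d i)) • (r x * uFneg C i) + x := by
    intro x
    rw [hr_leib _ _ _ (negWt_F C i), hr_gen, if_pos rfl, mul_one, pairB_single, C.a_diag]
    congr 3; push_cast; ring
  have h1 : r 1 = 0 := by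
    have := hr_leib 0 1 1 (negWt_one C)
    rw [pairB_zero, neg_zero, qpow_zero, one_smul, one_mul, mul_one, one_mul] at this
    simpa using this
  have hX : ∀ j m, j ≠ i → r (Xn C i j m) = 0 := by
    intro j m hj
    induction m with
    | zero => exact (hr_gen j).trans (if_neg (Ne.symm hj))
    | succ m ih =>
      rw [Xn_succ, map_sub r, map_smul, hf, ih, hr_leib _ _ _ (Xn_wt C i j m), ih, hr_gen,
        if_pos rfl, one_mul, mul_zero, add_zero, zero_mul, smul_zero, zero_add, pair_wX, sub_self]
  refine ker_R (B := Uneg C) _ _ r _ (geom_ne (C.d_pos i)) hf ?_ (top_X C i)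
  intro s hs
  suffices h : ∀ x, r x = 0 → r (x * s) = 0 by simpa using h 1 h1
  induction hs using Algebra.adjoin_induction with
  | mem s h =>
    obtain ⟨j, m, hj, rfl⟩ := h
    intro x hx
    rw [hr_leib _ _ _ (Xn_wt C i j m), hx, hX j m hj, zero_mul, smul_zero, mul_zero, add_zero]
  | algebraMap c =>
    intro x hx
    rw [← Algebra.commutes, ← Algebra.smul_def, map_smul, hx, smul_zero]
  | add a b _ _ ha hb => intro x hx; rw [mul_add, map_add, ha x hx, hb x hx, add_zero]
  | mul a b _ _ ha hb => intro x hx; rw [← mul_assoc]; exact hb _ (ha x hx)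

lemma ir_main (r : Uneg C →ₗ[KK] Uneg C)
    (hr_gen : ∀ k : I, r (uFneg C k) = if i = k then 1 else 0)
    (hr_leib : ∀ (β : I →₀ ℕ) (x y : ↥(Uneg C)), (x : Uq C) ∈ negWt C β →
        r (x * y) = r x * y + qpow (-pairB C i β) • (x * r y)) :
    (∀ u, r u = 0 ↔ u ∈ Algebra.adjoin KK (GY C i)) ∧
    ∀ (N : ℕ) (a : ℕ → Uneg C), (∀ n, a n ∈ Algebra.adjoin KK (GY C i)) →
      ∑ n ∈ Finset.range N, uFneg C i ^ n * a n = 0 → ∀ n < N, a n = 0 := by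
  have hf : ∀ x, r (uFneg C i * x) = qpow (-(2 * C.d i)) • (uFneg C i * r x) + x := by
    intro x
    rw [hr_leib _ _ _ (negWt_F C i), hr_gen, if_pos rfl, one_mul, pairB_single, C.a_diag, add_comm]
    congr 3; push_cast; ring
  have h1 : r 1 = 0 := by
    have := hr_leib 0 1 1 (negWt_one C)
    rw [pairB_zero, neg_zero, qpow_zero, one_smul, one_mul, mul_one, one_mul] at this
    simpa using this
  have hY : ∀ j m, j ≠ i → r (Yn C i j m) = 0 := by
    intro j m hj
    induction m with
    | zero => exact (hr_gen j).trans (if_neg (Ne.symm hj))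
    | succ m ih =>
      rw [Yn_succ, map_sub r, map_smul, hf, ih, hr_leib _ _ _ (Yn_wt C i j m), ih, hr_gen,
        if_pos rfl, mul_one, mul_zero, zero_mul, smul_zero, zero_add, zero_add, pair_wX, sub_self]
  refine ker_L (B := Uneg C) _ _ r _ (geom_ne (C.d_pos i)) hf ?_ (top_Y C i)
  intro s hs
  suffices h : ∀ x, r x = 0 → r (s * x) = 0 by simpa using h 1 h1
  induction hs using Algebra.adjoin_induction with
  | mem s h =>
    obtain ⟨j, m, hj, rfl⟩ := h
    intro x hx
    rw [hr_leib _ _ _ (Yn_wt C i j m), hx, hY j m hj, zero_mul, mul_zero, smul_zero, add_zero]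
  | algebraMap c =>
    intro x hx
    rw [← Algebra.smul_def, map_smul, hx, smul_zero]
  | add a b _ _ ha hb => intro x hx; rw [add_mul, map_add, ha x hx, hb x hx, add_zero]
  | mul a b _ _ ha hb => intro x hx; rw [mul_assoc]; exact ha _ (hb x hx)

end Fin5


section Gen6
variable {B : Type*} [Ring B] [Algebra KK B]

lemma step_aux {k s s' : KK} {e t x : B} (htx : t * x = s' • (x * t)) (hs : s * s' = 1) :
    k • x * -(e * t) - s • (-(e * t) * k • x) = k • ((e * x - x * e) * t) := by
  rw [neg_mul, mul_neg, mul_smul_comm, smul_mul_assoc, mul_assoc e t, htx,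
    mul_smul_comm, smul_neg, smul_comm k s', smul_smul, hs, one_smul, sub_mul, smul_sub,
    ← mul_assoc, ← mul_assoc]
  abel

lemma neg_aux {f t ti : B} (h : t * ti = 1) : f = -(t * -(ti * f)) := by
  rw [mul_neg, neg_neg, ← mul_assoc, h, one_mul]

end Gen6

section Fin6
variable (C : CartanData I) (i : I)

/-- `x_{j,m}` in `U_q` -/
def XU (j : I) (m : ℕ) : Uq C := xs (uF C i) (uF C j) (C.d i * C.a i j) (C.d i) m
/-- `y_{j,m}` in `U_q` -/
def YU (j : I) (m : ℕ) : Uq C := ys (uF C i) (uF C j) (C.d i * C.a i j) (C.d i) m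

/-- subalgebra generated by the `x_{j,m}` -/
def A1 : Subalgebra KK (Uq C) := Algebra.adjoin KK {x | ∃ j m, j ≠ i ∧ x = XU C i j m}
/-- subalgebra generated by the `y_{j,m}` -/
def A2 : Subalgebra KK (Uq C) := Algebra.adjoin KK {x | ∃ j m, j ≠ i ∧ x = YU C i j m}

lemma A1_eq : (Algebra.adjoin KK (GX C i)).map (Uneg C).val = A1 C i := by
  rw [AlgHom.map_adjoin, A1]
  congr 1
  ext x
  constructor
  · rintro ⟨_, ⟨j, m, hj, rfl⟩, rfl⟩; exact ⟨j, m, hj, Xn_val C i j m⟩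
  · rintro ⟨j, m, hj, rfl⟩; exact ⟨_, ⟨j, m, hj, rfl⟩, Xn_val C i j m⟩

lemma A2_eq : (Algebra.adjoin KK (GY C i)).map (Uneg C).val = A2 C i := by
  rw [AlgHom.map_adjoin, A2]
  congr 1
  ext x
  constructor
  · rintro ⟨_, ⟨j, m, hj, rfl⟩, rfl⟩; exact ⟨j, m, hj, Yn_val C i j m⟩
  · rintro ⟨j, m, hj, rfl⟩; exact ⟨_, ⟨j, m, hj, rfl⟩, Yn_val C i j m⟩

lemma mem_A1 (x : Uneg C) : (x : Uq C) ∈ A1 C i ↔ x ∈ Algebra.adjoin KK (GX C i) := by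
  rw [← A1_eq]
  constructor
  · rintro ⟨y, hy, h⟩
    have : y = x := Subtype.ext h
    exact this ▸ hy
  · intro h; exact ⟨x, h, rfl⟩

lemma mem_A2 (x : Uneg C) : (x : Uq C) ∈ A2 C i ↔ x ∈ Algebra.adjoin KK (GY C i) := by
  rw [← A2_eq]
  constructor
  · rintro ⟨y, hy, h⟩
    have : y = x := Subtype.ext h
    exact this ▸ hy
  · intro h; exact ⟨x, h, rfl⟩

lemma A1_le : A1 C i ≤ Uneg C := by
  rw [← A1_eq]; rintro _ ⟨y, _, rfl⟩; exact y.2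
lemma A2_le : A2 C i ≤ Uneg C := by
  rw [← A2_eq]; rintro _ ⟨y, _, rfl⟩; exact y.2

lemma XU_zero {j : I} (hj : j ≠ i) (n : ℕ) : XU C i j (AA C i j + 1 + n) = 0 := by
  induction n with
  | zero => exact serre_U C hj.symm
  | succ n ih =>
    rw [← add_assoc, XU, xs_succ]
    have ih' : xs (uF C i) (uF C j) (C.d i * C.a i j) (C.d i) (AA C i j + 1 + n) = 0 := ih
    rw [ih', mul_zero, zero_mul, smul_zero, sub_zero]

lemma tx (j : I) (m : ℕ) : uT C i * XU C i j m =
    qpow (-(C.d i * C.a i j) - 2 * C.d i * m) • (XU C i j m * uT C i) := by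
  have R := rels_U C
  refine xs_t' _ _ ?_ (R.t_f i j) m
  rw [R.t_f, C.a_diag, mul_comm 2]

variable (T : Uq C ≃ₐ[KK] Uq C)

lemma T_step (hTfi : T (uF C i) = -(uE C i * uT C i)) {j : I} (hj : j ≠ i) {m m' : ℕ}
    (hm : m + m' = AA C i j) (k : KK) (h : T (YU C i j m) = k • XU C i j m') :
    T (YU C i j (m+1)) = k • ((uE C i * XU C i j m' - XU C i j m' * uE C i) * uT C i) := by
  have e : YU C i j (m+1) = YU C i j m * uF C i -
    qpow (-(C.d i * C.a i j) - 2 * C.d i * m) • (uF C i * YU C i j m) := rfl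
  have hs : qpow (-(C.d i * C.a i j) - 2 * C.d i * m) * qpow (-(C.d i * C.a i j) - 2 * C.d i * m')
      = 1 := by
    rw [← qpow_add, ← qpow_zero]
    congr 1
    rw [AA_spec C hj.symm, ← hm]; push_cast; ring
  have htx := tx C i j m'
  rw [e, map_sub, map_smul, map_mul, map_mul, h, hTfi]
  exact step_aux htx hs

lemma T_Y (hTfi : T (uF C i) = -(uE C i * uT C i))
    (hTf : ∀ j : I, j ≠ i → T (uF C j) =
      ∑ r ∈ Finset.range ((-C.a i j).toNat + 1),
        ((-1 : KK) ^ r * qpow (C.d i * (r : ℤ))) •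
          (uFdp C i ((-C.a i j).toNat - r) * uF C j * uFdp C i r))
    {j : I} (hj : j ≠ i) (m : ℕ) : ∀ m', m + m' = AA C i j →
      ∃ k : KK, k ≠ 0 ∧ T (YU C i j m) = k • XU C i j m' := by
  have R := rels_U C
  induction m with
  | zero =>
    intro m' hm'
    rw [zero_add] at hm'
    subst hm'
    refine ⟨(qfact (C.d i) (AA C i j))⁻¹, inv_ne_zero (qfact_ne_zero (C.d_pos i) _), ?_⟩
    exact (hTf j hj).trans (xs_top (C.d_pos i) (AA_spec C hj.symm) (uF C i) (uF C j))
  | succ m ih =>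
    intro m' hm'
    obtain ⟨k, hk, h⟩ := ih (m'+1) (by omega)
    refine ⟨k * kap (C.d i * C.a i j) (C.d i) (m'+1) *
      (qpow (-(C.d i * C.a i j) - 2 * C.d i * m'))⁻¹, mul_ne_zero (mul_ne_zero hk
      (kap_ne_zero (C.d_pos i) (AA_spec C hj.symm) (by omega))) (inv_ne_zero (qpow_ne_zero _)), ?_⟩
    rw [T_step C i T hTfi hj (by omega) k h]
    have h2 : uE C i * XU C i j (m'+1) - XU C i j (m'+1) * uE C i = _ := R.xs_e hj.symm m'
    have h3 : XU C i j m' * uT C i =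
        (qpow (-(C.d i * C.a i j) - 2 * C.d i * m'))⁻¹ • (uT C i * XU C i j m') := by
      rw [tx, smul_smul, inv_mul_cancel₀ (qpow_ne_zero _), one_smul]
    rw [h2, smul_mul_assoc, mul_assoc (uTinv C i)]
    change k • kap (C.d i * C.a i j) (C.d i) (m'+1) • (uTinv C i * (XU C i j m' * uT C i)) = _
    rw [h3, mul_smul_comm, ← mul_assoc (uTinv C i), R.ti_t, one_mul, smul_smul, smul_smul]

lemma T_Y0 (hTfi : T (uF C i) = -(uE C i * uT C i))
    (hTf : ∀ j : I, j ≠ i → T (uF C j) =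
      ∑ r ∈ Finset.range ((-C.a i j).toNat + 1),
        ((-1 : KK) ^ r * qpow (C.d i * (r : ℤ))) •
          (uFdp C i ((-C.a i j).toNat - r) * uF C j * uFdp C i r))
    {j : I} (hj : j ≠ i) (n : ℕ) : T (YU C i j (AA C i j + 1 + n)) = 0 := by
  have R := rels_U C
  induction n with
  | zero =>
    obtain ⟨k, hk, h⟩ := T_Y C i T hTfi hTf hj (AA C i j) 0 rfl
    rw [add_zero, T_step C i T hTfi hj rfl k h]
    have : uE C i * XU C i j 0 = XU C i j 0 * uE C i := R.e_f_comm hj.symm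
    rw [this, sub_self, zero_mul, smul_zero]
  | succ n ih =>
    have e : YU C i j (AA C i j + 1 + (n+1)) = YU C i j (AA C i j + 1 + n) * uF C i -
      qpow (-(C.d i * C.a i j) - 2 * C.d i * ((AA C i j + 1 + n : ℕ) : ℤ)) •
        (uF C i * YU C i j (AA C i j + 1 + n)) := rfl
    rw [e, map_sub, map_smul, map_mul, map_mul, ih, zero_mul, mul_zero, smul_zero, sub_zero]

lemma A1_map (hTfi : T (uF C i) = -(uE C i * uT C i))
    (hTf : ∀ j : I, j ≠ i → T (uF C j) =
      ∑ r ∈ Finset.range ((-C.a i j).toNat + 1),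
        ((-1 : KK) ^ r * qpow (C.d i * (r : ℤ))) •
          (uFdp C i ((-C.a i j).toNat - r) * uF C j * uFdp C i r)) :
    (A2 C i).map T.toAlgHom = A1 C i := by
  apply le_antisymm
  · rw [A2, AlgHom.map_adjoin]
    refine Algebra.adjoin_le ?_
    rintro _ ⟨_, ⟨j, m, hj, rfl⟩, rfl⟩
    change T (YU C i j m) ∈ A1 C i
    by_cases hm : m ≤ AA C i j
    · obtain ⟨k, hk, h⟩ := T_Y C i T hTfi hTf hj m (AA C i j - m) (by omega)
      rw [h]
      exact (A1 C i).smul_mem (Algebra.subset_adjoin ⟨j, _, hj, rfl⟩) k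
    · obtain ⟨n, rfl⟩ := Nat.exists_eq_add_of_lt (not_le.mp hm)
      rw [add_right_comm, T_Y0 C i T hTfi hTf hj]
      exact (A1 C i).zero_mem
  · refine Algebra.adjoin_le ?_
    rintro _ ⟨j, m, hj, rfl⟩
    by_cases hm : m ≤ AA C i j
    · obtain ⟨k, hk, h⟩ := T_Y C i T hTfi hTf hj (AA C i j - m) m (by omega)
      have h2 : XU C i j m = T (k⁻¹ • YU C i j (AA C i j - m)) := by
        rw [map_smul, h, smul_smul, inv_mul_cancel₀ hk, one_smul]
      rw [h2]
      exact ⟨_, (A2 C i).smul_mem (Algebra.subset_adjoin ⟨j, _, hj, rfl⟩) _, rfl⟩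
    · obtain ⟨n, rfl⟩ := Nat.exists_eq_add_of_lt (not_le.mp hm)
      rw [add_right_comm, XU_zero C i hj]
      exact Subalgebra.zero_mem _

lemma T_symm_f (hTt : ∀ j : I, T (uT C j) = uT C j * tpow C i (-(C.a i j)))
    (hTei : T (uE C i) = -(uTinv C i * uF C i)) :
    T.symm (uF C i) = -(uTinv C i * uE C i) := by
  have R := rels_U C
  have h1 : T (uT C i) = uTinv C i := by
    rw [hTt, C.a_diag]
    have : tpow C i (-2) = uTinv C i * uTinv C i := by
      rw [tpow, if_neg (by norm_num)]; simp [pow_two]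
    rw [this, ← mul_assoc, R.t_ti, one_mul]
  have h2 : T (uTinv C i) = uT C i := by
    have h3 : T (uTinv C i) * T (uT C i) = 1 := by rw [← map_mul, R.ti_t, map_one]
    rw [h1] at h3
    calc T (uTinv C i) = T (uTinv C i) * (uTinv C i * uT C i) := by rw [R.ti_t, mul_one]
      _ = _ := by rw [← mul_assoc, h3, one_mul]
  rw [AlgEquiv.symm_apply_eq, map_neg, map_mul, h2, hTei]
  exact neg_aux (R.t_ti i)

/-- `U_i` is the subalgebra generated by the `x_{j,m}`. -/
lemma Usub_eq (hTt : ∀ j : I, T (uT C j) = uT C j * tpow C i (-(C.a i j)))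
    (hTei : T (uE C i) = -(uTinv C i * uF C i))
    (hA : (A2 C i).map T.toAlgHom = A1 C i) : Usub C T = A1 C i := by
  apply le_antisymm
  · rintro x ⟨hx, ⟨y, hy, hyx⟩⟩
    have hyx' : T y = x := hyx
    obtain ⟨a, ha⟩ := top_X C i ⟨x, hx⟩
    obtain ⟨N, hN⟩ := supp_lt a
    have hN' : a.support ⊆ Finset.range (N+1) := hN.trans (Finset.range_mono (Nat.le_succ N))
    have h1 : ∑ n ∈ Finset.range (N+1), (((a n : Uneg C)) : Uq C) * uF C i ^ n = x := by
      have := congrArg (Uneg C).val ((LR_range (B := Uneg C) _ _ a hN').symm.trans ha)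
      rw [map_sum] at this
      exact this
    have hmem : ∀ n, ((a n : Uneg C) : Uq C) ∈ A1 C i := fun n => (mem_A1 C i _).mpr (a n).2
    have hmem' : ∀ n, T.symm ((a n : Uneg C) : Uq C) ∈ Uneg C := by
      intro n
      have := hmem n
      rw [← hA] at this
      obtain ⟨z, hz, e⟩ := this
      have e' : T z = ((a n : Uneg C) : Uq C) := e
      rw [← e', AlgEquiv.symm_apply_apply]
      exact A2_le C i hz
    have h2 : ∑ n ∈ Finset.range (N+1), T.symm ((a n : Uneg C) : Uq C) *
        (-(uTinv C i * uE C i)) ^ n = y := by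
      rw [← T.symm_apply_apply y, hyx', ← h1, map_sum]
      refine Finset.sum_congr rfl fun n _ => ?_
      rw [map_mul, map_pow, T_symm_f C i T hTt hTei]
    have h3 := triang C i (N+1) (fun n => T.symm ((a n : Uneg C) : Uq C)) hmem'
      (by rw [h2]; exact hy)
    have h4 : ((a 0 : Uneg C) : Uq C) = x := by
      rw [← h1, Finset.sum_range_succ', Finset.sum_eq_zero, pow_zero, mul_one, zero_add]
      intro n hn
      have := h3 (n+1) (by omega) (by have := Finset.mem_range.mp hn; omega)
      have h5 : ((a (n+1) : Uneg C) : Uq C) = 0 := (map_eq_zero_iff T.symm T.symm.injective).mp this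
      rw [h5, zero_mul]
    rw [← h4]
    exact hmem 0
  · intro x hx
    refine ⟨A1_le C i hx, ?_⟩
    rw [← hA] at hx
    obtain ⟨z, hz, e⟩ := hx
    exact ⟨z, A2_le C i hz, e⟩

lemma subU_eq (hA : (A2 C i).map T.toAlgHom = A1 C i) (hU : Usub C T = A1 C i) :
    subU C T = A2 C i := by
  apply le_antisymm
  · rintro x ⟨hx, ⟨y, hy, e⟩⟩
    have e' : T.symm y = x := e
    have e2 : T x = y := by rw [← e', T.apply_symm_apply]
    have h : y ∈ Usub C T := ⟨hy, ⟨x, hx, e2⟩⟩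
    rw [hU, ← hA] at h
    obtain ⟨z, hz, e3⟩ := h
    have : z = x := T.injective (Eq.trans e3 e2.symm)
    exact this ▸ hz
  · intro x hx
    refine ⟨A2_le C i hx, ⟨T x, A1_le C i ?_, T.symm_apply_apply x⟩⟩
    rw [← hA]
    exact ⟨x, hx, rfl⟩

lemma range_R : LinearMap.range (LR (A1 C i) (uF C i)) = Subalgebra.toSubmodule (Uneg C) := by
  have hFi : uF C i ∈ Uneg C := Algebra.subset_adjoin ⟨i, rfl⟩
  apply le_antisymm
  · rintro _ ⟨a, rfl⟩
    induction a using Finsupp.induction_linear with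
    | zero => rw [map_zero]; exact Submodule.zero_mem _
    | add a b ha hb => rw [map_add]; exact Submodule.add_mem _ ha hb
    | single n a =>
      rw [LR_single]
      exact (Uneg C).mul_mem (A1_le C i a.2) ((Uneg C).pow_mem hFi n)
  · intro x hx
    obtain ⟨a, ha⟩ := top_X C i ⟨x, hx⟩
    have : x = ((LR (Algebra.adjoin KK (GX C i)) (uFneg C i) a : Uneg C) : Uq C) := by rw [ha]
    rw [this]
    clear this ha
    induction a using Finsupp.induction_linear with
    | zero => rw [map_zero]; exact Submodule.zero_mem _
    | add a b ha hb => rw [map_add]; exact Submodule.add_mem _ ha hb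
    | single n a =>
      rw [LR_single]
      exact ⟨Finsupp.single n ⟨_, (mem_A1 C i _).mpr a.2⟩, by rw [LR_single]; rfl⟩

lemma range_L : LinearMap.range (LL (A2 C i) (uF C i)) = Subalgebra.toSubmodule (Uneg C) := by
  have hFi : uF C i ∈ Uneg C := Algebra.subset_adjoin ⟨i, rfl⟩
  apply le_antisymm
  · rintro _ ⟨a, rfl⟩
    induction a using Finsupp.induction_linear with
    | zero => rw [map_zero]; exact Submodule.zero_mem _
    | add a b ha hb => rw [map_add]; exact Submodule.add_mem _ ha hb
    | single n a =>
      rw [LL_single]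
      exact (Uneg C).mul_mem ((Uneg C).pow_mem hFi n) (A2_le C i a.2)
  · intro x hx
    obtain ⟨a, ha⟩ := top_Y C i ⟨x, hx⟩
    have : x = ((LL (Algebra.adjoin KK (GY C i)) (uFneg C i) a : Uneg C) : Uq C) := by rw [ha]
    rw [this]
    clear this ha
    induction a using Finsupp.induction_linear with
    | zero => rw [map_zero]; exact Submodule.zero_mem _
    | add a b ha hb => rw [map_add]; exact Submodule.add_mem _ ha hb
    | single n a =>
      rw [LL_single]
      exact ⟨Finsupp.single n ⟨_, (mem_A2 C i _).mpr a.2⟩, by rw [LL_single]; rfl⟩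

end Fin6

theorem final
    (I : Type) [DecidableEq I] (C : CartanData I) (i : I)
    (T : Uq C ≃ₐ[KK] Uq C)
    (hTt : ∀ j : I, T (uT C j) = uT C j * tpow C i (-(C.a i j)))
    (hTei : T (uE C i) = -(uTinv C i * uF C i))
    (hTfi : T (uF C i) = -(uE C i * uT C i))
    (hTf : ∀ j : I, j ≠ i → T (uF C j) =
      ∑ r ∈ Finset.range ((-C.a i j).toNat + 1),
        ((-1 : KK) ^ r * qpow (C.d i * (r : ℤ))) •
          (uFdp C i ((-C.a i j).toNat - r) * uF C j * uFdp C i r))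
    (r ir : ↥(Uneg C) →ₗ[KK] ↥(Uneg C))
    (hr_gen : ∀ k : I, r (uFneg C k) = if i = k then 1 else 0)
    (hr_leib : ∀ (γ : I →₀ ℕ) (x y : ↥(Uneg C)), (y : Uq C) ∈ negWt C γ →
        r (x * y) = qpow (-pairB C i γ) • (r x * y) + x * r y)
    (hir_gen : ∀ k : I, ir (uFneg C k) = if i = k then 1 else 0)
    (hir_leib : ∀ (β : I →₀ ℕ) (x y : ↥(Uneg C)), (x : Uq C) ∈ negWt C β →
        ir (x * y) = ir x * y + qpow (-pairB C i β) • (x * ir y)) :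
    (Function.Injective (mulTwo C (Usub C T) (fSub C i)) ∧
      LinearMap.range (mulTwo C (Usub C T) (fSub C i)) =
        Subalgebra.toSubmodule (Uneg C)) ∧
    (Function.Injective (mulTwo C (fSub C i) (subU C T)) ∧
      LinearMap.range (mulTwo C (fSub C i) (subU C T)) =
        Subalgebra.toSubmodule (Uneg C)) ∧
    (∀ (x : Uq C) (hx : x ∈ Uneg C),
      (x ∈ Usub C T ↔ r ⟨x, hx⟩ = 0) ∧ (x ∈ subU C T ↔ ir ⟨x, hx⟩ = 0)) := by
  have hA := A1_map C i T hTfi hTf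
  have hU := Usub_eq C i T hTt hTei hA
  have hU' := subU_eq C i T hA hU
  obtain ⟨hk, hu⟩ := r_main C i r hr_gen hr_leib
  obtain ⟨hk', hu'⟩ := ir_main C i ir hir_gen hir_leib
  rw [hU, hU']
  have iR : Function.Injective (LR (A1 C i) (uF C i)) := by
    refine LR_inj _ _ fun N a ha hs n hn => ?_
    have := hu N (fun n => ⟨a n, A1_le C i (ha n)⟩) (fun n => (mem_A1 C i _).mp (ha n)) (by
      apply (Subtype.val_injective : Function.Injective (Subtype.val : Uneg C → Uq C))
      refine (map_sum (Uneg C).val _ _).trans ?_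
      exact hs) n hn
    exact congrArg Subtype.val this
  have iL : Function.Injective (LL (A2 C i) (uF C i)) := by
    refine LL_inj _ _ fun N a ha hs n hn => ?_
    have := hu' N (fun n => ⟨a n, A2_le C i (ha n)⟩) (fun n => (mem_A2 C i _).mp (ha n)) (by
      apply (Subtype.val_injective : Function.Injective (Subtype.val : Uneg C → Uq C))
      refine (map_sum (Uneg C).val _ _).trans ?_
      exact hs) n hn
    exact congrArg Subtype.val this
  refine ⟨?_, ?_, fun x hx => ⟨?_, ?_⟩⟩
  · rw [← range_R]
    exact tens_R (A1 C i) (uF C i) iR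
  · rw [← range_L]
    exact tens_L (A2 C i) (uF C i) iL
  · exact (mem_A1 C i ⟨x, hx⟩).trans (hk _).symm
  · exact (mem_A2 C i ⟨x, hx⟩).trans (hk' _).symm

/-- The multiplication map induces vector space isomorphisms
`U_i ⊗ k[f_i] ≅ U_q^-(𝔤)` and `k[f_i] ⊗ _iU ≅ U_q^-(𝔤)`, where
`U_i = U_q^-(𝔤) ∩ T_i U_q^-(𝔤)`, `_iU = U_q^-(𝔤) ∩ T_i⁻¹ U_q^-(𝔤)` and `k[f_i]` is the
subalgebra generated by `f_i`; equivalently, `U_i = Ker r_i` and `_iU = Ker (_ir)`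
(so that `U_q^-(𝔤) = ⊕_{n≥0} U_i f_i^n = ⊕_{n≥0} f_i^n (_iU)`). -/
theorem braid_intersection_tensor_decomposition
    (I : Type) [DecidableEq I] (C : CartanData I) (i : I)
    (T : Uq C ≃ₐ[KK] Uq C)
    (hTt : ∀ j : I, T (uT C j) = uT C j * tpow C i (-(C.a i j)))
    (hTei : T (uE C i) = -(uTinv C i * uF C i))
    (hTfi : T (uF C i) = -(uE C i * uT C i))
    (hTe : ∀ j : I, j ≠ i → T (uE C j) =
      ∑ r ∈ Finset.range ((-C.a i j).toNat + 1),
        ((-1 : KK) ^ r * qpow (-(C.d i * (r : ℤ)))) •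
          (uEdp C i r * uE C j * uEdp C i ((-C.a i j).toNat - r)))
    (hTf : ∀ j : I, j ≠ i → T (uF C j) =
      ∑ r ∈ Finset.range ((-C.a i j).toNat + 1),
        ((-1 : KK) ^ r * qpow (C.d i * (r : ℤ))) •
          (uFdp C i ((-C.a i j).toNat - r) * uF C j * uFdp C i r))
    (r ir : ↥(Uneg C) →ₗ[KK] ↥(Uneg C))
    (hr_gen : ∀ k : I, r (uFneg C k) = if i = k then 1 else 0)
    (hr_leib : ∀ (γ : I →₀ ℕ) (x y : ↥(Uneg C)), (y : Uq C) ∈ negWt C γ →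
        r (x * y) = qpow (-pairB C i γ) • (r x * y) + x * r y)
    (hir_gen : ∀ k : I, ir (uFneg C k) = if i = k then 1 else 0)
    (hir_leib : ∀ (β : I →₀ ℕ) (x y : ↥(Uneg C)), (x : Uq C) ∈ negWt C β →
        ir (x * y) = ir x * y + qpow (-pairB C i β) • (x * ir y)) :
    (Function.Injective (mulTwo C (Usub C T) (fSub C i)) ∧
      LinearMap.range (mulTwo C (Usub C T) (fSub C i)) =
        Subalgebra.toSubmodule (Uneg C)) ∧
    (Function.Injective (mulTwo C (fSub C i) (subU C T)) ∧
      LinearMap.range (mulTwo C (fSub C i) (subU C T)) =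
        Subalgebra.toSubmodule (Uneg C)) ∧
    (∀ (x : Uq C) (hx : x ∈ Uneg C),
      (x ∈ Usub C T ↔ r ⟨x, hx⟩ = 0) ∧ (x ∈ subU C T ↔ ir ⟨x, hx⟩ = 0)) := by
  exact final I C i T hTt hTei hTfi hTf r ir hr_gen hr_leib hir_gen hir_leib

end
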